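/- arXiv:1507.07498 — 3 statements merged into one kernel-verified Lean document; each statement's English description precedes it below -/
import Mathlib

section
/- There exists a polynomial f in four variables with rational coefficients and total degree at most 12 such that for every k = (k1,k2,k3,k4) ∈ ℤ^4 with nonnegative entries, the set Σ(k) is finite and |Σ(k)| = f(k1,k2,k3,k4). (This is the Ehrhart-type polynomiality of the counting function used in the proof of Theorem 2 of the paper.) -/
/-- The 70 linear inequalities defining Σ(k). -/
def SatisfiesIneqs (k : Fin 4 → ℤ) (p : Fin 12 → ℤ) : Prop :=
  p 11 ≤ k 0 ∧
  p 10 ≤ k 1 ∧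
  p 8 ≤ k 2 ∧
  p 3 ≤ k 3 ∧
  p 6 + p 10 + p 11 ≤ k 0 + k 1 ∧
  p 6 + p 7 + p 8 + p 9 + p 11 ≤ k 0 + k 1 + k 2 ∧
  p 6 + p 8 + p 9 + p 10 + p 11 ≤ k 0 + k 1 + k 2 ∧
  p 8 + p 9 + p 10 ≤ k 1 + k 2 ∧
  p 3 + p 4 + p 5 + p 6 + p 11 ≤ k 0 + k 1 + k 3 ∧
  p 3 + p 4 + p 6 + p 10 + p 11 ≤ k 0 + k 1 + k 3 ∧
  p 3 + p 4 + p 10 ≤ k 1 + k 3 ∧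
  p 1 + p 3 + p 4 + p 8 + p 9 ≤ k 1 + k 2 + k 3 ∧
  p 3 + p 4 + p 8 + p 9 + p 10 ≤ k 1 + k 2 + k 3 ∧
  p 2 + p 3 + p 4 + p 5 + p 6 + p 8 + p 11 ≤ k 0 + k 1 + k 2 + k 3 ∧
  p 1 + p 2 + p 3 + p 4 + p 6 + p 8 + p 11 ≤ k 0 + k 1 + k 2 + k 3 ∧
  p 1 + p 2 + p 3 + p 6 + p 7 + p 8 + p 11 ≤ k 0 + k 1 + k 2 + k 3 ∧
  p 1 + p 3 + p 6 + p 7 + p 8 + p 9 + p 11 ≤ k 0 + k 1 + k 2 + k 3 ∧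
  p 3 + p 4 + p 6 + p 8 + p 9 + p 10 + p 11 ≤ k 0 + k 1 + k 2 + k 3 ∧
  p 1 + p 3 + p 4 + p 6 + p 8 + p 9 + p 11 ≤ k 0 + k 1 + k 2 + k 3 ∧
  p 0 + p 2 + p 3 + p 4 + p 5 + p 6 + p 7 + p 8 + p 10 ≤ k 0 + 2 * k 1 + k 2 + k 3 ∧
  p 0 + p 1 + p 2 + p 3 + p 4 + p 6 + p 7 + p 8 + p 10 ≤ k 0 + 2 * k 1 + k 2 + k 3 ∧
  p 2 + p 3 + p 4 + p 5 + p 6 + p 7 + p 8 + p 10 + p 11 ≤ k 0 + 2 * k 1 + k 2 + k 3 ∧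
  p 1 + p 2 + p 3 + p 4 + p 6 + p 7 + p 8 + p 10 + p 11 ≤ k 0 + 2 * k 1 + k 2 + k 3 ∧
  p 0 + p 1 + p 3 + p 4 + p 6 + p 7 + p 8 + p 9 + p 10 ≤ k 0 + 2 * k 1 + k 2 + k 3 ∧
  p 1 + p 3 + p 4 + p 6 + p 7 + p 8 + p 9 + p 10 + p 11 ≤ k 0 + 2 * k 1 + k 2 + k 3 ∧
  p 0 + p 3 + p 4 + p 5 + p 6 + p 7 + p 8 + p 9 + p 10 ≤ k 0 + 2 * k 1 + k 2 + k 3 ∧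
  p 3 + p 4 + p 5 + p 6 + p 7 + p 8 + p 9 + p 10 + p 11 ≤ k 0 + 2 * k 1 + k 2 + k 3 ∧
  p 1 + p 2 + p 3 + p 4 + p 6 + p 7 + 2 * p 8 + p 9 + p 10 + p 11 ≤ k 0 + 2 * k 1 + 2 * k 2 + k 3 ∧
  p 2 + p 3 + p 4 + p 5 + p 6 + p 7 + 2 * p 8 + p 9 + p 10 + p 11 ≤ k 0 + 2 * k 1 + 2 * k 2 + k 3 ∧
  p 0 + p 1 + p 2 + p 3 + p 4 + p 6 + p 7 + 2 * p 8 + p 9 + p 10 ≤ k 0 + 2 * k 1 + 2 * k 2 + k 3 ∧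
  p 0 + p 2 + p 3 + p 4 + p 5 + p 6 + p 7 + 2 * p 8 + p 9 + p 10 ≤ k 0 + 2 * k 1 + 2 * k 2 + k 3 ∧
  p 1 + p 3 + p 4 + p 6 + p 7 + 2 * p 8 + 2 * p 9 + p 10 + p 11 ≤ k 0 + 2 * k 1 + 2 * k 2 + k 3 ∧
  p 1 + p 2 + 2 * p 3 + p 4 + p 5 + p 6 + p 7 + p 8 + p 10 + p 11 ≤ k 0 + 2 * k 1 + k 2 + 2 * k 3 ∧
  p 1 + 2 * p 3 + p 4 + p 5 + p 6 + p 7 + p 8 + p 9 + p 10 + p 11 ≤ k 0 + 2 * k 1 + k 2 + 2 * k 3 ∧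
  p 0 + p 1 + p 2 + 2 * p 3 + p 4 + p 5 + p 6 + p 7 + p 8 + p 10 ≤ k 0 + 2 * k 1 + k 2 + 2 * k 3 ∧
  p 0 + p 1 + 2 * p 3 + p 4 + p 5 + p 6 + p 7 + p 8 + p 9 + p 10 ≤ k 0 + 2 * k 1 + k 2 + 2 * k 3 ∧
  p 1 + p 2 + 2 * p 3 + 2 * p 4 + p 5 + p 6 + p 8 + p 10 + p 11 ≤ k 0 + 2 * k 1 + k 2 + 2 * k 3 ∧
  p 1 + 2 * p 3 + 2 * p 4 + p 5 + p 6 + p 8 + p 9 + p 10 + p 11 ≤ k 0 + 2 * k 1 + k 2 + 2 * k 3 ∧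
  p 2 + p 3 + p 4 + p 5 + 2 * p 6 + p 7 + p 8 + p 10 + 2 * p 11 ≤ 2 * k 0 + 2 * k 1 + k 2 + k 3 ∧
  p 3 + p 4 + p 5 + 2 * p 6 + p 7 + p 8 + p 9 + p 10 + 2 * p 11 ≤ 2 * k 0 + 2 * k 1 + k 2 + k 3 ∧
  p 1 + p 2 + p 3 + p 4 + 2 * p 6 + p 7 + p 8 + p 10 + 2 * p 11 ≤ 2 * k 0 + 2 * k 1 + k 2 + k 3 ∧
  p 1 + p 3 + p 4 + 2 * p 6 + p 7 + p 8 + p 9 + p 10 + 2 * p 11 ≤ 2 * k 0 + 2 * k 1 + k 2 + k 3 ∧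
  p 0 + p 1 + p 2 + 2 * p 3 + p 4 + p 5 + p 6 + p 7 + 2 * p 8 + p 9 + p 10 ≤ k 0 + 2 * k 1 + 2 * k 2 + 2 * k 3 ∧
  p 1 + p 2 + 2 * p 3 + p 4 + p 5 + p 6 + p 7 + 2 * p 8 + p 9 + p 10 + p 11 ≤ k 0 + 2 * k 1 + 2 * k 2 + 2 * k 3 ∧
  p 1 + p 2 + 2 * p 3 + 2 * p 4 + p 5 + p 6 + 2 * p 8 + p 9 + p 10 + p 11 ≤ k 0 + 2 * k 1 + 2 * k 2 + 2 * k 3 ∧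
  p 1 + p 2 + 2 * p 3 + p 4 + p 5 + 2 * p 6 + p 7 + p 8 + p 10 + 2 * p 11 ≤ 2 * k 0 + 2 * k 1 + k 2 + 2 * k 3 ∧
  p 1 + 2 * p 3 + p 4 + p 5 + 2 * p 6 + p 7 + p 8 + p 9 + p 10 + 2 * p 11 ≤ 2 * k 0 + 2 * k 1 + k 2 + 2 * k 3 ∧
  p 1 + p 2 + 2 * p 3 + 2 * p 4 + p 5 + 2 * p 6 + p 8 + p 10 + 2 * p 11 ≤ 2 * k 0 + 2 * k 1 + k 2 + 2 * k 3 ∧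
  p 1 + 2 * p 3 + 2 * p 4 + p 5 + 2 * p 6 + p 8 + p 9 + p 10 + 2 * p 11 ≤ 2 * k 0 + 2 * k 1 + k 2 + 2 * k 3 ∧
  p 1 + p 2 + p 3 + p 4 + 2 * p 6 + p 7 + 2 * p 8 + p 9 + p 10 + 2 * p 11 ≤ 2 * k 0 + 2 * k 1 + 2 * k 2 + k 3 ∧
  p 2 + p 3 + p 4 + p 5 + 2 * p 6 + p 7 + 2 * p 8 + p 9 + p 10 + 2 * p 11 ≤ 2 * k 0 + 2 * k 1 + 2 * k 2 + k 3 ∧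
  p 1 + p 3 + p 4 + 2 * p 6 + p 7 + 2 * p 8 + 2 * p 9 + p 10 + 2 * p 11 ≤ 2 * k 0 + 2 * k 1 + 2 * k 2 + k 3 ∧
  p 1 + p 2 + 2 * p 3 + p 4 + p 5 + 2 * p 6 + p 7 + 2 * p 8 + p 9 + p 10 + 2 * p 11 ≤ 2 * k 0 + 2 * k 1 + 2 * k 2 + 2 * k 3 ∧
  p 1 + p 2 + 2 * p 3 + 2 * p 4 + p 5 + 2 * p 6 + 2 * p 8 + p 9 + p 10 + 2 * p 11 ≤ 2 * k 0 + 2 * k 1 + 2 * k 2 + 2 * k 3 ∧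
  p 1 + p 2 + 2 * p 3 + 2 * p 4 + p 5 + p 6 + p 7 + p 8 + 2 * p 10 + p 11 ≤ k 0 + 3 * k 1 + k 2 + 2 * k 3 ∧
  p 1 + 2 * p 3 + 2 * p 4 + p 5 + p 6 + p 7 + p 8 + p 9 + 2 * p 10 + p 11 ≤ k 0 + 3 * k 1 + k 2 + 2 * k 3 ∧
  p 0 + p 1 + p 2 + 2 * p 3 + 2 * p 4 + p 5 + p 6 + p 7 + p 8 + 2 * p 10 ≤ k 0 + 3 * k 1 + k 2 + 2 * k 3 ∧
  p 0 + p 1 + 2 * p 3 + 2 * p 4 + p 5 + p 6 + p 7 + p 8 + p 9 + 2 * p 10 ≤ k 0 + 3 * k 1 + k 2 + 2 * k 3 ∧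
  p 0 + p 1 + 2 * p 3 + 2 * p 4 + p 5 + p 6 + p 7 + 2 * p 8 + 2 * p 9 + 2 * p 10 ≤ k 0 + 3 * k 1 + 2 * k 2 + 2 * k 3 ∧
  p 1 + 2 * p 3 + 2 * p 4 + p 5 + p 6 + p 7 + 2 * p 8 + 2 * p 9 + 2 * p 10 + p 11 ≤ k 0 + 3 * k 1 + 2 * k 2 + 2 * k 3 ∧
  p 0 + p 1 + 2 * p 3 + 2 * p 4 + p 5 + 2 * p 6 + p 7 + p 8 + p 9 + 2 * p 10 + p 11 ≤ 2 * k 0 + 3 * k 1 + k 2 + 2 * k 3 ∧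
  p 0 + p 1 + p 2 + 2 * p 3 + 2 * p 4 + p 5 + 2 * p 6 + p 7 + p 8 + 2 * p 10 + p 11 ≤ 2 * k 0 + 3 * k 1 + k 2 + 2 * k 3 ∧
  p 0 + p 1 + 2 * p 3 + 2 * p 4 + p 5 + 2 * p 6 + p 7 + 2 * p 8 + 2 * p 9 + 2 * p 10 + p 11 ≤ 2 * k 0 + 3 * k 1 + 2 * k 2 + 2 * k 3 ∧
  p 1 + p 2 + 2 * p 3 + 2 * p 4 + p 5 + p 6 + p 7 + 3 * p 8 + 2 * p 9 + 2 * p 10 + p 11 ≤ k 0 + 3 * k 1 + 3 * k 2 + 2 * k 3 ∧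
  p 0 + p 1 + p 2 + 2 * p 3 + 2 * p 4 + p 5 + p 6 + p 7 + 3 * p 8 + 2 * p 9 + 2 * p 10 ≤ k 0 + 3 * k 1 + 3 * k 2 + 2 * k 3 ∧
  p 1 + p 2 + 2 * p 3 + 2 * p 4 + p 5 + 3 * p 6 + p 7 + p 8 + 2 * p 10 + 3 * p 11 ≤ 3 * k 0 + 3 * k 1 + k 2 + 2 * k 3 ∧
  p 1 + 2 * p 3 + 2 * p 4 + p 5 + 3 * p 6 + p 7 + p 8 + p 9 + 2 * p 10 + 3 * p 11 ≤ 3 * k 0 + 3 * k 1 + k 2 + 2 * k 3 ∧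
  p 1 + p 2 + 2 * p 3 + 2 * p 4 + p 5 + 3 * p 6 + p 7 + 3 * p 8 + 2 * p 9 + 2 * p 10 + 3 * p 11 ≤ 3 * k 0 + 3 * k 1 + 3 * k 2 + 2 * k 3 ∧
  p 0 + p 1 + p 2 + 2 * p 3 + 2 * p 4 + p 5 + 2 * p 6 + p 7 + 3 * p 8 + 2 * p 9 + 2 * p 10 + p 11 ≤ 2 * k 0 + 3 * k 1 + 3 * k 2 + 2 * k 3 ∧
  p 1 + 2 * p 3 + 2 * p 4 + p 5 + 3 * p 6 + p 7 + 2 * p 8 + 2 * p 9 + 2 * p 10 + 3 * p 11 ≤ 3 * k 0 + 3 * k 1 + 2 * k 2 + 2 * k 3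

/-- Σ(k): the set of 12-tuples of nonnegative integers satisfying the 70 inequalities. -/
def SigmaSet (k : Fin 4 → ℤ) : Set (Fin 12 → ℤ) :=
  {p | (∀ j, 0 ≤ p j) ∧ SatisfiesIneqs k p}


section general
variable {ι E : Type} [Fintype ι] [AddCommGroup E] [Module ℝ E]

/-- `x` is a nonnegative combination of the `v i`. -/
def CMem (v : ι → E) (x : E) : Prop := ∃ c : ι → ℝ, (∀ i, 0 ≤ c i) ∧ ∑ i, c i • v i = x

theorem CMem.add {v : ι → E} {x y : E} (hx : CMem v x) (hy : CMem v y) : CMem v (x + y) := by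
  obtain ⟨c, hc, rfl⟩ := hx
  obtain ⟨d, hd, rfl⟩ := hy
  exact ⟨fun i => c i + d i, fun i => add_nonneg (hc i) (hd i), by
    simp [add_smul, Finset.sum_add_distrib]⟩

theorem CMem.smul {v : ι → E} {x : E} (hx : CMem v x) {t : ℝ} (ht : 0 ≤ t) : CMem v (t • x) := by
  obtain ⟨c, hc, rfl⟩ := hx
  exact ⟨fun i => t * c i, fun i => mul_nonneg ht (hc i), by
    simp [mul_smul, Finset.smul_sum]⟩

theorem CMem.zero {v : ι → E} : CMem v 0 := ⟨0, by simp, by simp⟩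

theorem CMem.sum {κ : Type} {v : ι → E} (s : Finset κ) (f : κ → E) (h : ∀ i ∈ s, CMem v (f i)) :
    CMem v (∑ i ∈ s, f i) := by
  classical
  induction s using Finset.induction_on with
  | empty => simpa using CMem.zero
  | insert a s ha ih =>
    rw [Finset.sum_insert ha]
    exact (h a (by simp)).add (ih fun i hi => h i (by simp [hi]))

theorem CMem.base (v : ι → E) (i : ι) : CMem v (v i) := by
  classical
  exact ⟨Pi.single i 1, fun j => by
    by_cases h : j = i
    · subst h; simp
    · simp [h], by simp [Pi.single_apply]⟩

theorem coeff_compact {κ : Type} [Fintype κ] (v : ι → κ → ℝ) (h : (κ → ℝ) →ₗ[ℝ] ℝ)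
    (hv : ∀ i, 0 < h (v i)) (x : κ → ℝ) :
    IsCompact {c : ι → ℝ | (∀ i, 0 ≤ c i) ∧ ∑ i, c i • v i = x} := by
  apply IsCompact.of_isClosed_subset (isCompact_Icc (a := (0 : ι → ℝ)) (b := fun i => h x / h (v i)))
  · apply IsClosed.inter
    · have : {c : ι → ℝ | ∀ i, 0 ≤ c i} = ⋂ i, {c : ι → ℝ | 0 ≤ c i} := by ext; simp
      show IsClosed {c : ι → ℝ | ∀ i, 0 ≤ c i}
      rw [this]
      exact isClosed_iInter fun i => isClosed_le continuous_const (continuous_apply i)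
    · exact isClosed_eq (by fun_prop) continuous_const
  · rintro c ⟨hc, rfl⟩
    refine ⟨fun i => hc i, fun i => ?_⟩
    show c i ≤ _
    rw [le_div_iff₀ (hv i), map_sum]
    simp only [map_smul, smul_eq_mul]
    exact Finset.single_le_sum (f := fun j => c j * h (v j))
      (fun j _ => mul_nonneg (hc j) (hv j).le) (Finset.mem_univ i)

theorem dd_step {κ ι' : Type} [Fintype κ] [Fintype ι'] (v : ι → κ → ℝ) (v' : ι' → κ → ℝ)
    (h : (κ → ℝ) →ₗ[ℝ] ℝ) (hv : ∀ i, 0 < h (v i))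
    {J : Type} [Finite J] (l : J → (κ → ℝ) →ₗ[ℝ] ℝ)
    (hC : ∀ x, (∀ j, 0 ≤ l j x) → CMem v x)
    (hnn : ∀ i j, 0 ≤ l j (v i))
    (a : (κ → ℝ) →ₗ[ℝ] ℝ)
    (h1 : ∀ i, 0 ≤ a (v i) → CMem v' (v i))
    (h2 : ∀ i k, 0 < a (v i) → a (v k) < 0 →
      (∃ z, a (v z) = 0 ∧ ∀ j, l j (v z) = 0 ∨ 0 < l j (v i) + l j (v k)) ∨
      CMem v' (a (v i) • v k - a (v k) • v i))
    (x : κ → ℝ) (hx : ∀ j, 0 ≤ l j x) (hax : 0 ≤ a x) : CMem v' x := by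
  classical
  obtain ⟨c, ⟨hc, hcx⟩, hmax⟩ := (coeff_compact v h hv x).exists_isMaxOn
    (hC x hx) (f := fun c => ∑ i, if a (v i) = 0 then c i else 0) (by
      refine Continuous.continuousOn (continuous_finsetSum _ fun i _ => ?_)
      split_ifs <;> fun_prop)
  -- good pairs
  have key : ∀ i k, 0 < a (v i) → a (v k) < 0 → 0 < c i → 0 < c k →
      CMem v' (a (v i) • v k - a (v k) • v i) := by
    intro i k hi hk hci hck
    rcases h2 i k hi hk with ⟨z, hz, hzl⟩ | h
    swap
    · exact h
    exfalso
    -- small ε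
    have hε : ∃ ε : ℝ, 0 < ε ∧ ∀ j, 0 ≤ l j (v i + v k - ε • v z) := by
      have : ∀ᶠ ε in nhdsWithin (0 : ℝ) (Set.Ioi 0), ∀ j, 0 ≤ l j (v i + v k - ε • v z) := by
        rw [Filter.eventually_all]
        intro j
        simp only [map_sub, map_add, map_smul, smul_eq_mul]
        rcases hzl j with h0 | h0
        · refine Filter.Eventually.of_forall fun ε => ?_
          rw [h0]
          have := hnn i j
          have := hnn k j
          linarith
        · have : Filter.Tendsto (fun ε : ℝ => l j (v i) + l j (v k) - ε * l j (v z))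
              (nhdsWithin 0 (Set.Ioi 0)) (nhds (l j (v i) + l j (v k) - 0 * l j (v z))) := by
            apply Filter.Tendsto.mono_left _ nhdsWithin_le_nhds
            apply Continuous.tendsto
            fun_prop
          have h3 := this.eventually (lt_mem_nhds (a := 0) (by simpa using h0))
          exact h3.mono fun _ => le_of_lt
      obtain ⟨ε, h4, h5⟩ := (this.and self_mem_nhdsWithin).exists
      exact ⟨ε, h5, h4⟩
    obtain ⟨ε, hε0, hε⟩ := hε
    obtain ⟨m, hm, hmx⟩ := hC _ hε
    set δ := min (c i) (c k) with hδ
    have hδ0 : 0 < δ := lt_min hci hck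
    have hik : i ≠ k := by rintro rfl; linarith
    have hiz : i ≠ z := by rintro rfl; linarith
    have hkz : k ≠ z := by rintro rfl; linarith
    let c' : ι → ℝ := fun w => c w - (if w = i then δ else 0) - (if w = k then δ else 0)
      + δ * m w + (if w = z then δ * ε else 0)
    have hc' : c' ∈ {c : ι → ℝ | (∀ i, 0 ≤ c i) ∧ ∑ i, c i • v i = x} := by
      constructor
      · intro w
        have h6 := mul_nonneg hδ0.le (hm w)
        have h7 := mul_nonneg hδ0.le hε0.le
        have h8 := hc w
        have h9 : δ ≤ c i := min_le_left _ _
        have h10 : δ ≤ c k := min_le_right _ _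
        simp only [c']
        split_ifs with e1 e2 e3 <;> subst_vars <;> linarith
      · have : ∑ w, c' w • v w = ∑ w, c w • v w - δ • v i - δ • v k + δ • ∑ w, m w • v w
            + (δ * ε) • v z := by
          simp [c', add_smul, sub_smul, Finset.sum_add_distrib, Finset.sum_sub_distrib,
            ite_smul, mul_smul, Finset.smul_sum]
        rw [this, hmx, hcx]
        simp only [smul_sub, smul_add, mul_smul]
        abel
    have h11 := isMaxOn_iff.mp hmax c' hc'
    have h12 : ∑ w, (if a (v w) = 0 then c w else 0) + δ * ε
        ≤ ∑ w, (if a (v w) = 0 then c' w else 0) := by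
      have e : δ * ε = ∑ w, if w = z then δ * ε else 0 := by simp
      rw [e, ← Finset.sum_add_distrib]
      refine Finset.sum_le_sum fun w _ => ?_
      have h6 := mul_nonneg hδ0.le (hm w)
      by_cases hw : a (v w) = 0
      · have e1 : w ≠ i := by rintro rfl; linarith
        have e2 : w ≠ k := by rintro rfl; linarith
        simp only [hw, if_true, c', e1, e2, if_false]
        linarith
      · have e3 : w ≠ z := by rintro rfl; exact hw hz
        simp [hw, e3]
    have := mul_pos hδ0 hε0
    linarith
  -- now assemble
  set p := ∑ i, if 0 < a (v i) then c i * a (v i) else 0 with hp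
  set q := ∑ i, if a (v i) < 0 then c i * (- a (v i)) else 0 with hq
  have hpq : a x = p - q := by
    rw [← hcx, map_sum, hp, hq, ← Finset.sum_sub_distrib]
    refine Finset.sum_congr rfl fun i _ => ?_
    rw [map_smul, smul_eq_mul]
    rcases lt_trichotomy (a (v i)) 0 with h | h | h
    · simp [h, not_lt.mpr h.le]
    · simp [h]
    · simp [h, not_lt.mpr h.le]
  have hp0 : 0 ≤ p := Finset.sum_nonneg fun i _ => by
    split_ifs with h
    · exact mul_nonneg (hc i) h.le
    · rfl
  have hq0 : ∀ i, a (v i) < 0 → c i * (-a (v i)) ≤ q := by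
    intro i hi
    have := Finset.single_le_sum (f := fun i => if a (v i) < 0 then c i * (- a (v i)) else 0)
      (fun j _ => by
        split_ifs with h
        · exact mul_nonneg (hc j) (by linarith)
        · rfl) (Finset.mem_univ i)
    simp only [hi, if_true] at this
    exact this
  rcases hp0.eq_or_lt with hp0 | hp0
  · -- no negatives
    rw [← hcx]
    refine CMem.sum _ _ fun i _ => ?_
    by_cases hi : 0 ≤ a (v i)
    · exact (h1 i hi).smul (hc i)
    · push Not at hi
      have h3 := hq0 i hi
      have : c i = 0 := by
        have := hc i
        by_contra hne
        have : 0 < c i := lt_of_le_of_ne this (Ne.symm hne)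
        have := mul_pos this (neg_pos.mpr hi)
        linarith
      simp [this, CMem.zero]
  · have hqp : q ≤ p := by linarith
    have : x = ∑ i, (if a (v i) = 0 then c i else 0) • v i
        + (1 - q / p) • ∑ i, (if 0 < a (v i) then c i else 0) • v i
        + ∑ i, ∑ k, ((if 0 < a (v i) then c i else 0) * (if a (v k) < 0 then c k else 0) / p) •
          (a (v i) • v k - a (v k) • v i) := by
      have e1 : ∑ i, ∑ k, ((if 0 < a (v i) then c i else 0) *
            (if a (v k) < 0 then c k else 0) / p) • (a (v i) • v k - a (v k) • v i)
          = (p / p) • ∑ k, (if a (v k) < 0 then c k else 0) • v k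
            + (q / p) • ∑ i, (if 0 < a (v i) then c i else 0) • v i := by
        simp only [smul_sub, smul_smul, Finset.sum_sub_distrib]
        have e2 : ∑ i, ∑ k, ((if 0 < a (v i) then c i else 0) *
            (if a (v k) < 0 then c k else 0) / p * a (v i)) • v k
            = (p / p) • ∑ k, (if a (v k) < 0 then c k else 0) • v k := by
          rw [Finset.sum_comm, Finset.smul_sum]
          refine Finset.sum_congr rfl fun k _ => ?_
          rw [← Finset.sum_smul, smul_smul]
          congr 1
          rw [hp, Finset.sum_div, Finset.sum_mul, ← hp]
          refine Finset.sum_congr rfl fun i _ => ?_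
          split_ifs <;> ring
        have e3 : ∑ i, ∑ k, ((if 0 < a (v i) then c i else 0) *
            (if a (v k) < 0 then c k else 0) / p * a (v k)) • v i
            = -((q / p) • ∑ i, (if 0 < a (v i) then c i else 0) • v i) := by
          rw [Finset.smul_sum, ← Finset.sum_neg_distrib]
          refine Finset.sum_congr rfl fun i _ => ?_
          rw [← Finset.sum_smul, smul_smul, ← neg_smul]
          congr 1
          rw [hq, Finset.sum_div, Finset.sum_mul, ← Finset.sum_neg_distrib]
          refine Finset.sum_congr rfl fun i _ => ?_
          split_ifs <;> ring
        rw [e2, e3]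
        abel
      rw [e1, div_self hp0.ne', one_smul, sub_smul, one_smul]
      conv_lhs => rw [← hcx]
      have e4 : ∑ i, c i • v i = ∑ i, (if a (v i) = 0 then c i else 0) • v i
          + ∑ i, (if 0 < a (v i) then c i else 0) • v i
          + ∑ i, (if a (v i) < 0 then c i else 0) • v i := by
        rw [← Finset.sum_add_distrib, ← Finset.sum_add_distrib]
        refine Finset.sum_congr rfl fun i _ => ?_
        rcases lt_trichotomy (a (v i)) 0 with h | h | h
        · simp [h, h.ne, not_lt.mpr h.le]
        · simp [h]
        · simp [h, h.ne', not_lt.mpr h.le]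
      rw [e4]
      abel
    rw [this]
    refine CMem.add (CMem.add ?_ (CMem.smul ?_ ?_)) ?_
    · refine CMem.sum _ _ fun i _ => ?_
      split_ifs with h
      · exact (h1 i h.ge).smul (hc i)
      · simpa using CMem.zero
    · refine CMem.sum _ _ fun i _ => ?_
      split_ifs with h
      · exact (h1 i h.le).smul (hc i)
      · simpa using CMem.zero
    · rw [sub_nonneg, div_le_one hp0]
      exact hqp
    · refine CMem.sum _ _ fun i _ => CMem.sum _ _ fun k _ => ?_
      by_cases hi : 0 < a (v i) ∧ 0 < c i
      · by_cases hk : a (v k) < 0 ∧ 0 < c k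
        · refine CMem.smul (key i k hi.1 hk.1 hi.2 hk.2) ?_
          simp only [hi.1, hk.1, if_true]
          exact div_nonneg (mul_nonneg (hc i) (hc k)) hp0.le
        · have : (if a (v k) < 0 then c k else 0) = 0 := by
            split_ifs with h
            · exact le_antisymm (not_lt.mp fun h' => hk ⟨h, h'⟩) (hc k)
            · rfl
          simpa [this] using CMem.zero
      · have : (if 0 < a (v i) then c i else 0) = 0 := by
          split_ifs with h
          · exact le_antisymm (not_lt.mp fun h' => hi ⟨h, h'⟩) (hc i)
          · rfl
        simpa [this] using CMem.zero

end general

abbrev Ray := List ℕ × ℕ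

noncomputable def force {α : Type} (n : ℕ) (k : ℕ → α) : α := Nat.rec (k 0) (fun m _ => k (Nat.succ m)) n

theorem force_eq {α : Type} (n : ℕ) (k : ℕ → α) : force n k = k n := by cases n <;> rfl

noncomputable def forceV {α : Type} (l : List ℕ) : (List ℕ → α) → α :=
  List.rec (fun k => k []) (fun x _ ih k => force x fun x' => ih fun xs => k (x' :: xs)) l

theorem forceV_eq {α : Type} (l : List ℕ) (k : List ℕ → α) : forceV l k = k l := by
  induction l generalizing k with
  | nil => rfl
  | cons x xs ih =>
    show force x (fun x' => forceV xs fun xs => k (x' :: xs)) = _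
    rw [force_eq, ih]

noncomputable def forceR {α : Type} (l : List Ray) : (List Ray → α) → α :=
  List.rec (fun k => k [])
    (fun x _ ih k => forceV x.1 fun a => force x.2 fun b => ih fun xs => k ((a, b) :: xs)) l

theorem forceR_eq {α : Type} (l : List Ray) (k : List Ray → α) : forceR l k = k l := by
  induction l generalizing k with
  | nil => rfl
  | cons x xs ih =>
    show forceV x.1 (fun a => force x.2 fun b => forceR xs fun xs => k ((a, b) :: xs)) = _
    rw [forceV_eq, force_eq, ih]

noncomputable def dot (l : List ℕ) : List ℕ → ℕ :=
  List.rec (fun _ => 0) (fun x _ ih m => List.rec 0 (fun y ys _ => Nat.add (Nat.mul x y) (ih ys)) m) l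

noncomputable def comb (s t : ℕ) (l : List ℕ) : List ℕ → List ℕ :=
  List.rec (fun _ => []) (fun x _ ih m => List.rec []
    (fun y ys _ => Nat.add (Nat.mul s x) (Nat.mul t y) :: ih ys) m) l

noncomputable def flt {β : Type} (f : β → Bool) (l : List β) : List β :=
  List.rec [] (fun x _ ih => cond (f x) (x :: ih) ih) l

noncomputable def anyZ (c : ℕ) (l : List Ray) : Bool :=
  List.rec false (fun z _ ih => cond (Nat.beq (Nat.land z.2 c) c) true ih) l

noncomputable def mapc {β γ : Type} (f : β → γ) (l : List β) (t : List γ) : List γ :=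
  List.rec t (fun x _ ih => f x :: ih) l

/-- combine a positive ray with all negative rays -/
noncomputable def pairs (P N : List ℕ) (bit : ℕ) (zer : List Ray) (r : Ray) (neg : List Ray)
    (t : List Ray) : List Ray :=
  List.rec t (fun s _ ih => force (Nat.land r.2 s.2) fun c => cond (anyZ c zer) ih
    ((comb (Nat.sub (dot P r.1) (dot N r.1)) (Nat.sub (dot N s.1) (dot P s.1)) s.1 r.1,
      Nat.lor c bit) :: ih)) neg

noncomputable def step {α : Type} (P N : List ℕ) (bit : ℕ) (R : List Ray) (k : List Ray → α) : α :=
  forceR (flt (fun r => Nat.blt (dot N r.1) (dot P r.1)) R) fun pos =>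
  forceR (flt (fun r => Nat.blt (dot P r.1) (dot N r.1)) R) fun neg =>
  forceR (flt (fun r => Nat.beq (dot P r.1) (dot N r.1)) R) fun zer =>
  forceR (mapc (fun r => r) pos (mapc (fun r => (r.1, Nat.lor r.2 bit)) zer
    (List.rec [] (fun r _ ih => pairs P N bit zer r neg ih) pos))) k

noncomputable def steps (cons : List (List ℕ × List ℕ)) : ℕ → List Ray → (List Ray → Bool) → Bool :=
  List.rec (fun _ R k => k R) (fun a _ ih bit R k => step a.1 a.2 bit R fun R' =>
    force (Nat.mul 2 bit) fun b => ih b R' k) cons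


theorem CMem.trans {ι ι' E : Type} [Fintype ι] [Fintype ι'] [AddCommGroup E] [Module ℝ E]
    {v : ι → E} {w : ι' → E} {x : E} (h : CMem v x) (hw : ∀ i, CMem w (v i)) : CMem w x := by
  obtain ⟨c, hc, rfl⟩ := h
  exact CMem.sum _ _ fun i _ => (hw i).smul (hc i)

def vec (l : List ℕ) : Fin 16 → ℝ := fun i => (l.getD i 0 : ℝ)

def lin (a : List ℕ × List ℕ) : (Fin 16 → ℝ) →ₗ[ℝ] ℝ where
  toFun x := ∑ i : Fin 16, ((a.1.getD i 0 : ℝ) - (a.2.getD i 0 : ℝ)) * x i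
  map_add' x y := by simp [mul_add, Finset.sum_add_distrib]
  map_smul' t x := by
    simp only [Pi.smul_apply, smul_eq_mul, RingHom.id_apply, Finset.mul_sum]
    exact Finset.sum_congr rfl fun i _ => by ring

theorem lin_apply (a : List ℕ × List ℕ) (x : Fin 16 → ℝ) :
    lin a x = ∑ i : Fin 16, ((a.1.getD i 0 : ℝ) - (a.2.getD i 0 : ℝ)) * x i := rfl

theorem dot_cons (x y : ℕ) (xs ys : List ℕ) : dot (x :: xs) (y :: ys) = x * y + dot xs ys := rfl

theorem dot_eq (n : ℕ) : ∀ (l m : List ℕ), m.length = n →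
    dot l m = ∑ i ∈ Finset.range n, l.getD i 0 * m.getD i 0 := by
  induction n with
  | zero =>
    intro l m hm
    rw [List.length_eq_zero_iff.mp hm]
    cases l <;> rfl
  | succ n ih =>
    intro l m hm
    cases m with
    | nil => simp at hm
    | cons y ys =>
      cases l with
      | nil => simp; rfl
      | cons x xs =>
        rw [dot_cons, Finset.sum_range_succ', ih xs ys (by simpa using hm)]
        simp [add_comm]

theorem lin_vec (a : List ℕ × List ℕ) (l : List ℕ) (hl : l.length = 16) :
    lin a (vec l) = (dot a.1 l : ℝ) - (dot a.2 l : ℝ) := by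
  rw [lin_apply, dot_eq 16 _ _ hl, dot_eq 16 _ _ hl, ← Fin.sum_univ_eq_sum_range
    (fun i => a.1.getD i 0 * l.getD i 0), ← Fin.sum_univ_eq_sum_range
    (fun i => a.2.getD i 0 * l.getD i 0)]
  push_cast
  rw [← Finset.sum_sub_distrib]
  exact Finset.sum_congr rfl fun i _ => by simp only [vec]; ring

theorem comb_length (s t : ℕ) : ∀ (l m : List ℕ), l.length = m.length →
    (comb s t l m).length = l.length := by
  intro l
  induction l with
  | nil => intro m _; rfl
  | cons x xs ih =>
    intro m hm
    cases m with
    | nil => simp at hm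
    | cons y ys =>
      show (comb s t xs ys).length + 1 = _
      rw [ih ys (by simpa using hm)]
      rfl

theorem comb_getD (s t : ℕ) : ∀ (l m : List ℕ), l.length = m.length → ∀ i,
    (comb s t l m).getD i 0 = s * l.getD i 0 + t * m.getD i 0 := by
  intro l
  induction l with
  | nil =>
    intro m hm i
    rw [List.length_eq_zero_iff.mp hm.symm]
    simp; rfl
  | cons x xs ih =>
    intro m hm i
    cases m with
    | nil => simp at hm
    | cons y ys =>
      have e : comb s t (x :: xs) (y :: ys) = (s * x + t * y) :: comb s t xs ys := rfl
      rw [e]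
      cases i with
      | zero => simp
      | succ i => simpa using ih ys (by simpa using hm) i

theorem vec_comb (s t : ℕ) (l m : List ℕ) (h : l.length = m.length) :
    vec (comb s t l m) = (s : ℝ) • vec l + (t : ℝ) • vec m := by
  funext i
  simp only [vec, Pi.add_apply, Pi.smul_apply, smul_eq_mul]
  rw [comb_getD s t l m h]
  push_cast
  rfl

theorem mem_flt {β : Type} (f : β → Bool) (l : List β) (x : β) :
    x ∈ flt f l ↔ x ∈ l ∧ f x = true := by
  induction l with
  | nil => simp [flt]
  | cons y ys ih =>
    have e : flt f (y :: ys) = cond (f y) (y :: flt f ys) (flt f ys) := rfl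
    rw [e]
    cases h : f y
    · simp only [cond_false, ih, List.mem_cons]
      constructor
      · tauto
      · rintro ⟨rfl | h1, h2⟩
        · rw [h] at h2; cases h2
        · exact ⟨h1, h2⟩
    · simp only [cond_true, ih, List.mem_cons]
      constructor
      · rintro (rfl | h1)
        · exact ⟨Or.inl rfl, h⟩
        · exact ⟨Or.inr h1.1, h1.2⟩
      · tauto

theorem anyZ_iff (c : ℕ) (l : List Ray) : anyZ c l = true ↔ ∃ z ∈ l, z.2 &&& c = c := by
  induction l with
  | nil => simp [anyZ]
  | cons y ys ih =>
    have e : anyZ c (y :: ys) = cond (Nat.beq (y.2 &&& c) c) true (anyZ c ys) := rfl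
    rw [e]
    cases h : Nat.beq (y.2 &&& c) c
    · have := Nat.ne_of_beq_eq_false h
      simp [ih, this]
    · have := Nat.eq_of_beq_eq_true h
      simp [this]

theorem mapc_eq {β γ : Type} (f : β → γ) (l : List β) (t : List γ) :
    mapc f l t = l.map f ++ t := by
  induction l with
  | nil => rfl
  | cons y ys ih =>
    show f y :: mapc f ys t = _
    rw [ih]; rfl

/-- the new ray -/
noncomputable def nray (P N : List ℕ) (bit : ℕ) (r s : Ray) : Ray :=
  (comb (dot P r.1 - dot N r.1) (dot N s.1 - dot P s.1) s.1 r.1, (r.2 &&& s.2) ||| bit)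

theorem mem_pairs (P N : List ℕ) (bit : ℕ) (zer : List Ray) (r : Ray) (neg t : List Ray) (x : Ray) :
    x ∈ pairs P N bit zer r neg t ↔
      x ∈ t ∨ ∃ s ∈ neg, anyZ (r.2 &&& s.2) zer = false ∧ x = nray P N bit r s := by
  induction neg with
  | nil => simp [pairs]
  | cons s ss ih =>
    have e : pairs P N bit zer r (s :: ss) t = force (Nat.land r.2 s.2) fun c =>
      cond (anyZ c zer) (pairs P N bit zer r ss t)
      ((comb (Nat.sub (dot P r.1) (dot N r.1)) (Nat.sub (dot N s.1) (dot P s.1)) s.1 r.1,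
      Nat.lor c bit) :: pairs P N bit zer r ss t) := rfl
    have e2 : pairs P N bit zer r (s :: ss) t = cond (anyZ (r.2 &&& s.2) zer)
      (pairs P N bit zer r ss t) (nray P N bit r s :: pairs P N bit zer r ss t) := by
      rw [e, force_eq]; rfl
    rw [e2]
    cases h : anyZ (r.2 &&& s.2) zer
    · simp only [cond_false, List.mem_cons, ih, exists_eq_or_imp, h, true_and]
      tauto
    · simp only [cond_true, List.mem_cons, ih, exists_eq_or_imp, h]
      simp

noncomputable def stepL (P N : List ℕ) (bit : ℕ) (R : List Ray) : List Ray :=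
  mapc (fun r => r) (flt (fun r => Nat.blt (dot N r.1) (dot P r.1)) R)
  (mapc (fun r => (r.1, Nat.lor r.2 bit)) (flt (fun r => Nat.beq (dot P r.1) (dot N r.1)) R)
    (List.rec [] (fun r _ ih => pairs P N bit (flt (fun r => Nat.beq (dot P r.1) (dot N r.1)) R) r
      (flt (fun r => Nat.blt (dot P r.1) (dot N r.1)) R) ih)
      (flt (fun r => Nat.blt (dot N r.1) (dot P r.1)) R)))

theorem step_eq {α : Type} (P N : List ℕ) (bit : ℕ) (R : List Ray) (k : List Ray → α) :
    step P N bit R k = k (stepL P N bit R) := by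
  unfold step
  simp only [forceR_eq]
  rfl

theorem mem_rec (P N : List ℕ) (bit : ℕ) (zer neg pos : List Ray) (x : Ray) :
    x ∈ (List.rec [] (fun r _ ih => pairs P N bit zer r neg ih) pos : List Ray) ↔
      ∃ r ∈ pos, ∃ s ∈ neg, anyZ (r.2 &&& s.2) zer = false ∧ x = nray P N bit r s := by
  induction pos with
  | nil => simp
  | cons r rs ih =>
    simp only [mem_pairs, ih, List.mem_cons, exists_eq_or_imp]
    exact or_comm

theorem mem_stepL (P N : List ℕ) (bit : ℕ) (R : List Ray) (x : Ray) :
    x ∈ stepL P N bit R ↔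
      (x ∈ R ∧ dot N x.1 < dot P x.1) ∨
      (∃ z ∈ R, dot P z.1 = dot N z.1 ∧ x = (z.1, z.2 ||| bit)) ∨
      ∃ r ∈ R, dot N r.1 < dot P r.1 ∧ ∃ s ∈ R, dot P s.1 < dot N s.1 ∧
        (¬ ∃ z ∈ R, dot P z.1 = dot N z.1 ∧ z.2 &&& (r.2 &&& s.2) = r.2 &&& s.2) ∧
        x = nray P N bit r s := by
  unfold stepL
  have e0 : ∀ a b, Nat.blt a b = true ↔ a < b := by intro a b; simp [Nat.blt]
  have e1 : ∀ a b, Nat.beq a b = true ↔ a = b := by intro a b; simp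
  rw [mapc_eq, mapc_eq]
  simp only [List.mem_append, List.mem_map, mem_rec, mem_flt, e0, e1, ← Bool.not_eq_true, anyZ_iff]
  constructor
  · rintro (⟨r, h, rfl⟩ | ⟨z, h, rfl⟩ | ⟨r, h, s, h2, h3, h4⟩)
    · exact Or.inl h
    · exact Or.inr (Or.inl ⟨z, h.1, h.2, rfl⟩)
    · exact Or.inr (Or.inr ⟨r, h.1, h.2, s, h2.1, h2.2, fun ⟨z, a, b, c⟩ => h3 ⟨z, ⟨a, b⟩, c⟩, h4⟩)
  · rintro (h | ⟨z, h, h', rfl⟩ | ⟨r, h, h', s, h2, h2', h3, h4⟩)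
    · exact Or.inl ⟨x, h, rfl⟩
    · exact Or.inr (Or.inl ⟨z, ⟨h, h'⟩, rfl⟩)
    · exact Or.inr (Or.inr ⟨r, ⟨h, h'⟩, s, ⟨h2, h2'⟩, fun ⟨z, a, c⟩ => h3 ⟨z, a.1, a.2, c⟩, h4⟩)

structure DDInv (L : List (List ℕ × List ℕ)) (R : List Ray) : Prop where
  len : ∀ r ∈ R, r.1.length = 16
  pos : ∀ r ∈ R, 0 < ∑ i, vec r.1 i
  lt : ∀ r ∈ R, r.2 < 2 ^ L.length
  nn : ∀ r ∈ R, ∀ j : Fin L.length, 0 ≤ lin L[j] (vec r.1)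
  bit : ∀ r ∈ R, ∀ j : Fin L.length, r.2.testBit j = true ↔ lin L[j] (vec r.1) = 0
  gen : ∀ x, (∀ j : Fin L.length, 0 ≤ lin L[j] x) → CMem (fun r : {r // r ∈ R} => vec r.1.1) x

theorem sum_vec_nn (l : List ℕ) : 0 ≤ ∑ i, vec l i :=
  Finset.sum_nonneg fun i _ => by simp [vec]

theorem vec_nray (a : List ℕ × List ℕ) (bit : ℕ) (r s : Ray) (hr : r.1.length = 16)
    (hs : s.1.length = 16) (h1 : dot a.2 r.1 < dot a.1 r.1) (h2 : dot a.1 s.1 < dot a.2 s.1) :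
    vec (nray a.1 a.2 bit r s).1 =
      lin a (vec r.1) • vec s.1 + (- lin a (vec s.1)) • vec r.1 := by
  rw [nray, vec_comb _ _ _ _ (by rw [hr, hs]), lin_vec _ _ hr, lin_vec _ _ hs,
    Nat.cast_sub h1.le, Nat.cast_sub h2.le]
  simp

theorem DDInv.step {L : List (List ℕ × List ℕ)} {R : List Ray} (h : DDInv L R) (a : List ℕ × List ℕ) :
    DDInv (L ++ [a]) (stepL a.1 a.2 (2 ^ L.length) R) := by
  have hpos : ∀ r ∈ R, dot a.2 r.1 < dot a.1 r.1 ↔ 0 < lin a (vec r.1) := by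
    intro r hr
    rw [lin_vec _ _ (h.len r hr), sub_pos, Nat.cast_lt]
  have hneg : ∀ r ∈ R, dot a.1 r.1 < dot a.2 r.1 ↔ lin a (vec r.1) < 0 := by
    intro r hr
    rw [lin_vec _ _ (h.len r hr), sub_neg, Nat.cast_lt]
  have hzer : ∀ r ∈ R, dot a.1 r.1 = dot a.2 r.1 ↔ lin a (vec r.1) = 0 := by
    intro r hr
    rw [lin_vec _ _ (h.len r hr), sub_eq_zero, Nat.cast_inj]
  have hjs : ∀ (Q : List ℕ × List ℕ → ℕ → Prop), (∀ j : Fin L.length, Q L[j] j) → Q a L.length →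
      ∀ j : Fin (L ++ [a]).length, Q (L ++ [a])[j] j := by
    intro Q h1 h2 ⟨j, hj⟩
    rcases Nat.lt_or_ge j L.length with h3 | h3
    · simpa [List.getElem_append_left h3] using h1 ⟨j, h3⟩
    · have : j = L.length := by
        simp at hj; omega
      subst this
      simpa using h2
  have hlen : (L ++ [a]).length = L.length + 1 := by simp
  -- description of new rays
  have hnew : ∀ r ∈ R, dot a.2 r.1 < dot a.1 r.1 → ∀ s ∈ R, dot a.1 s.1 < dot a.2 s.1 →
      ∀ l : (Fin 16 → ℝ) →ₗ[ℝ] ℝ, l (vec (nray a.1 a.2 (2 ^ L.length) r s).1) =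
      lin a (vec r.1) * l (vec s.1) + (- lin a (vec s.1)) * l (vec r.1) := by
    intro r hr h1 s hs h2 l
    rw [vec_nray a _ r s (h.len r hr) (h.len s hs) h1 h2, map_add, map_smul, map_smul,
      smul_eq_mul, smul_eq_mul]
  refine ⟨?_, ?_, ?_, ?_, ?_, ?_⟩
  · intro x hx
    rw [mem_stepL] at hx
    rcases hx with ⟨h1, _⟩ | ⟨z, hz, _, rfl⟩ | ⟨r, hr, _, s, hs, _, _, rfl⟩
    · exact h.len x h1
    · exact h.len z hz
    · rw [nray, comb_length _ _ _ _ (by rw [h.len r hr, h.len s hs]), h.len s hs]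
  · intro x hx
    rw [mem_stepL] at hx
    rcases hx with ⟨h1, _⟩ | ⟨z, hz, _, rfl⟩ | ⟨r, hr, h1, s, hs, h2, _, rfl⟩
    · exact h.pos x h1
    · exact h.pos z hz
    · rw [vec_nray a _ r s (h.len r hr) (h.len s hs) h1 h2]
      simp only [Pi.add_apply, Pi.smul_apply, smul_eq_mul, Finset.sum_add_distrib, ← Finset.mul_sum]
      have := (hpos r hr).1 h1
      have h3 := (hneg s hs).1 h2
      exact add_pos (mul_pos this (h.pos s hs)) (mul_pos (neg_pos.2 h3) (h.pos r hr))
  · intro x hx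
    rw [mem_stepL] at hx
    have hle : 2 ^ L.length < 2 ^ (L ++ [a]).length := by
      rw [hlen]; exact Nat.pow_lt_pow_right (by norm_num) (by omega)
    rcases hx with ⟨h1, _⟩ | ⟨z, hz, _, rfl⟩ | ⟨r, hr, h1, s, hs, h2, _, rfl⟩
    · exact (h.lt x h1).trans hle
    · exact Nat.or_lt_two_pow ((h.lt z hz).trans hle) hle
    · exact Nat.or_lt_two_pow (Nat.and_lt_two_pow _ ((h.lt s hs).trans hle)) hle
  · intro x hx
    rw [mem_stepL] at hx
    rcases hx with ⟨h1, h2⟩ | ⟨z, hz, hz2, rfl⟩ | ⟨r, hr, h1, s, hs, h2, _, rfl⟩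
    · exact hjs (fun b _ => 0 ≤ lin b (vec x.1)) (h.nn x h1) ((hpos x h1).1 h2).le
    · exact hjs (fun b _ => 0 ≤ lin b (vec z.1)) (h.nn z hz) ((hzer z hz).1 hz2).ge
    · have h3 := (hpos r hr).1 h1
      have h4 := (hneg s hs).1 h2
      refine hjs (fun b _ => 0 ≤ lin b _) (fun j => ?_) ?_
      · rw [hnew r hr h1 s hs h2]
        have := mul_nonneg h3.le (h.nn s hs j)
        have := mul_nonneg (neg_pos.2 h4).le (h.nn r hr j)
        linarith
      · rw [hnew r hr h1 s hs h2]
        exact le_of_eq (by ring)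
  · intro x hx
    rw [mem_stepL] at hx
    have tb : ∀ r ∈ R, r.2.testBit L.length = false := fun r hr =>
      Nat.testBit_lt_two_pow (h.lt r hr)
    have tj : ∀ j : Fin L.length, (2 ^ L.length).testBit j = false := fun j => by
      rw [Nat.testBit_two_pow]; simp; omega
    rcases hx with ⟨h1, h2⟩ | ⟨z, hz, hz2, rfl⟩ | ⟨r, hr, h1, s, hs, h2, _, rfl⟩
    · refine hjs (fun b j => x.2.testBit j = true ↔ lin b (vec x.1) = 0) (h.bit x h1) ?_
      rw [tb x h1]
      have := (hpos x h1).1 h2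
      simp [this.ne']
    · refine hjs (fun b j => (z.2 ||| 2 ^ L.length).testBit j = true ↔ lin b (vec z.1) = 0)
        (fun j => ?_) ?_
      · rw [Nat.testBit_or, tj j, Bool.or_false]
        exact h.bit z hz j
      · rw [Nat.testBit_or, Nat.testBit_two_pow_self, (hzer z hz).1 hz2]
        simp
    · have h3 := (hpos r hr).1 h1
      have h4 := (hneg s hs).1 h2
      refine hjs (fun b j => (nray a.1 a.2 (2 ^ L.length) r s).2.testBit j = true ↔ lin b _ = 0)
        (fun j => ?_) ?_
      · rw [hnew r hr h1 s hs h2]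
        show ((r.2 &&& s.2) ||| 2 ^ L.length).testBit j = true ↔ _
        rw [Nat.testBit_or, tj j, Bool.or_false, Nat.testBit_and, Bool.and_eq_true,
          h.bit r hr j, h.bit s hs j]
        have h5 := mul_nonneg h3.le (h.nn s hs j)
        have h6 := mul_nonneg (neg_pos.2 h4).le (h.nn r hr j)
        constructor
        · rintro ⟨e1, e2⟩
          rw [e1, e2]; simp
        · intro e
          have e1 : lin a (vec r.1) * lin L[j] (vec s.1) = 0 := by linarith
          have e2 : -lin a (vec s.1) * lin L[j] (vec r.1) = 0 := by linarith
          constructor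
          · rcases mul_eq_zero.1 e2 with e3 | e3
            · linarith
            · exact e3
          · rcases mul_eq_zero.1 e1 with e3 | e3
            · linarith
            · exact e3
      · rw [hnew r hr h1 s hs h2]
        show ((r.2 &&& s.2) ||| 2 ^ L.length).testBit L.length = true ↔ _
        rw [Nat.testBit_or, Nat.testBit_two_pow_self, Bool.or_true]
        simp only [true_iff]
        ring
  · intro x hx
    have hmS := mem_stepL a.1 a.2 (2 ^ L.length) R
    generalize stepL a.1 a.2 (2 ^ L.length) R = S at hmS ⊢
    have hmem : ∀ y ∈ S,
        CMem (fun r : {r // r ∈ S} => vec r.1.1) (vec y.1) :=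
      fun y hy => CMem.base (fun r : {r // r ∈ S} => vec r.1.1) ⟨y, hy⟩
    refine dd_step (fun r : {r // r ∈ R} => vec r.1.1) _
      (∑ i, LinearMap.proj i) (fun r => ?_) (fun j : Fin L.length => lin L[j]) h.gen
      (fun r j => h.nn r.1 r.2 j) (lin a) ?_ ?_ x ?_ ?_
    · simpa using h.pos r.1 r.2
    · rintro ⟨r, hr⟩ h1
      simp only at h1 ⊢
      rcases h1.eq_or_lt with h1 | h1
      · exact hmem (r.1, r.2 ||| 2 ^ L.length)
          ((hmS _).2 (Or.inr (Or.inl ⟨r, hr, (hzer r hr).2 h1.symm, rfl⟩)))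
      · exact hmem r ((hmS _).2 (Or.inl ⟨hr, (hpos r hr).2 h1⟩))
    · rintro ⟨r, hr⟩ ⟨s, hs⟩ h1 h2
      simp only at h1 h2 ⊢
      by_cases hz : ∃ z ∈ R, dot a.1 z.1 = dot a.2 z.1 ∧ z.2 &&& (r.2 &&& s.2) = r.2 &&& s.2
      · left
        obtain ⟨z, hz, hz1, hz2⟩ := hz
        refine ⟨⟨z, hz⟩, (hzer z hz).1 hz1, fun j => ?_⟩
        simp only
        by_cases e : lin L[j] (vec r.1) = 0 ∧ lin L[j] (vec s.1) = 0
        · left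
          rw [← h.bit z hz j]
          have := congrArg (fun n => n.testBit j) hz2
          simp only [Nat.testBit_and, (h.bit r hr j).2 e.1, (h.bit s hs j).2 e.2] at this
          simpa using this
        · right
          have e1 := h.nn r hr j
          have e2 := h.nn s hs j
          refine lt_of_le_of_ne (add_nonneg e1 e2) fun e3 => e ⟨by linarith, by linarith⟩
      · right
        have h3 := (hpos r hr).2 h1
        have h4 := (hneg s hs).2 h2
        have := hmem (nray a.1 a.2 (2 ^ L.length) r s)
          ((hmS _).2 (Or.inr (Or.inr ⟨r, hr, h3, s, hs, h4, hz, rfl⟩)))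
        rw [vec_nray a _ r s (h.len r hr) (h.len s hs) h3 h4] at this
        rwa [neg_smul, ← sub_eq_add_neg] at this
    · intro j
      have := hx ⟨j, by rw [hlen]; omega⟩
      simpa [List.getElem_append_left j.2] using this
    · have := hx ⟨L.length, by rw [hlen]; omega⟩
      simpa using this

theorem DDInv.steps (cons : List (List ℕ × List ℕ)) : ∀ {L : List (List ℕ × List ℕ)} {R : List Ray}
    (_ : DDInv L R) (k : List Ray → Bool), steps cons (2 ^ L.length) R k = true →
    ∃ R', DDInv (L ++ cons) R' ∧ k R' = true := by
  induction cons with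
  | nil => intro L R h k hk; exact ⟨R, by simpa using h, hk⟩
  | cons a as ih =>
    intro L R h k hk
    have e : _root_.steps (a :: as) (2 ^ L.length) R k = _root_.step a.1 a.2 (2 ^ L.length) R fun R' =>
      force (Nat.mul 2 (2 ^ L.length)) fun b => _root_.steps as b R' k := rfl
    rw [e, step_eq, force_eq] at hk
    have e2 : Nat.mul 2 (2 ^ L.length) = 2 ^ (L ++ [a]).length := by
      simp [pow_succ, mul_comm]
    rw [e2] at hk
    obtain ⟨R', h1, h2⟩ := ih (h.step a) k hk
    exact ⟨R', by simpa using h1, h2⟩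


def consL : List (List ℕ × List ℕ) := [
([0, 1, 0, 0], [0, 0, 0, 0, 0, 0, 0, 0, 0, 0, 0, 0, 0, 0, 1, 0]),
([0, 0, 0, 1], [0, 0, 0, 0, 0, 0, 0, 1, 0, 0, 0, 0, 0, 0, 0, 0]),
([1, 0, 0, 0], [0, 0, 0, 0, 0, 0, 0, 0, 0, 0, 0, 0, 0, 0, 0, 1]),
([0, 0, 1, 0], [0, 0, 0, 0, 0, 0, 0, 0, 0, 0, 0, 0, 1, 0, 0, 0]),
([1, 1, 0, 0], [0, 0, 0, 0, 0, 0, 0, 0, 0, 0, 1, 0, 0, 0, 1, 1]),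
([1, 1, 1, 0], [0, 0, 0, 0, 0, 0, 0, 0, 0, 0, 1, 0, 1, 1, 1, 1]),
([1, 1, 1, 1], [0, 0, 0, 0, 0, 0, 0, 1, 1, 0, 1, 0, 1, 1, 1, 1]),
([0, 1, 1, 0], [0, 0, 0, 0, 0, 0, 0, 0, 0, 0, 0, 0, 1, 1, 1, 0]),
([0, 1, 1, 1], [0, 0, 0, 0, 0, 0, 0, 1, 1, 0, 0, 0, 1, 1, 1, 0]),
([0, 1, 0, 1], [0, 0, 0, 0, 0, 0, 0, 1, 1, 0, 0, 0, 0, 0, 1, 0]),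
([1, 1, 0, 1], [0, 0, 0, 0, 0, 0, 0, 1, 1, 0, 1, 0, 0, 0, 1, 1]),
([1, 1, 0, 1], [0, 0, 0, 0, 0, 0, 0, 1, 1, 1, 1, 0, 0, 0, 0, 1]),
([1, 1, 1, 1], [0, 0, 0, 0, 0, 1, 0, 1, 1, 0, 1, 0, 1, 1, 0, 1]),
([1, 1, 1, 1], [0, 0, 0, 0, 0, 1, 0, 1, 0, 0, 1, 1, 1, 1, 0, 1]),
([1, 1, 1, 1], [0, 0, 0, 0, 0, 0, 1, 1, 1, 1, 1, 0, 1, 0, 0, 1]),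
([1, 2, 1, 1], [0, 0, 0, 0, 0, 1, 0, 1, 1, 0, 1, 1, 1, 1, 1, 1]),
([1, 2, 1, 1], [0, 0, 0, 0, 1, 1, 0, 1, 1, 0, 1, 1, 1, 1, 1, 0]),
([2, 2, 1, 2], [0, 0, 0, 0, 0, 1, 0, 2, 2, 1, 2, 0, 1, 1, 1, 2]),
([1, 2, 1, 2], [0, 0, 0, 0, 0, 1, 0, 2, 2, 1, 1, 0, 1, 1, 1, 1]),
([2, 2, 2, 2], [0, 0, 0, 0, 0, 1, 1, 2, 2, 1, 2, 0, 2, 1, 1, 2]),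
([1, 2, 2, 2], [0, 0, 0, 0, 0, 1, 1, 2, 2, 1, 1, 0, 2, 1, 1, 1]),
([1, 2, 1, 2], [0, 0, 0, 0, 0, 1, 1, 2, 2, 1, 1, 0, 1, 0, 1, 1]),
([0, 1, 1, 1], [0, 0, 0, 0, 0, 1, 0, 1, 1, 0, 0, 0, 1, 1, 0, 0]),
([2, 2, 1, 2], [0, 0, 0, 0, 0, 1, 0, 2, 1, 1, 2, 1, 1, 1, 1, 2]),
([2, 2, 2, 2], [0, 0, 0, 0, 0, 1, 1, 2, 1, 1, 2, 1, 2, 1, 1, 2]),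
([1, 2, 1, 2], [0, 0, 0, 0, 0, 1, 0, 2, 1, 1, 1, 1, 1, 1, 1, 1]),
([1, 2, 2, 2], [0, 0, 0, 0, 0, 1, 1, 2, 1, 1, 1, 1, 2, 1, 1, 1]),
([1, 2, 1, 2], [0, 0, 0, 0, 0, 1, 1, 2, 1, 1, 1, 1, 1, 0, 1, 1]),
([2, 3, 1, 2], [0, 0, 0, 0, 1, 1, 0, 2, 2, 1, 2, 1, 1, 1, 2, 1]),
([2, 3, 2, 2], [0, 0, 0, 0, 1, 1, 0, 2, 2, 1, 2, 1, 2, 2, 2, 1]),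
([1, 3, 1, 2], [0, 0, 0, 0, 1, 1, 0, 2, 2, 1, 1, 1, 1, 1, 2, 0]),
([1, 3, 1, 2], [0, 0, 0, 0, 0, 1, 0, 2, 2, 1, 1, 1, 1, 1, 2, 1]),
([1, 1, 1, 1], [0, 0, 0, 0, 0, 1, 1, 1, 1, 0, 1, 0, 1, 0, 0, 1]),
([1, 2, 2, 1], [0, 0, 0, 0, 0, 1, 0, 1, 1, 0, 1, 1, 2, 2, 1, 1]),
([1, 3, 2, 2], [0, 0, 0, 0, 0, 1, 0, 2, 2, 1, 1, 1, 2, 2, 2, 1]),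
([2, 2, 2, 1], [0, 0, 0, 0, 0, 1, 0, 1, 1, 0, 2, 1, 2, 2, 1, 2]),
([1, 2, 1, 1], [0, 0, 0, 0, 0, 0, 0, 1, 1, 1, 1, 1, 1, 1, 1, 1]),
([1, 3, 3, 2], [0, 0, 0, 0, 0, 1, 1, 2, 2, 1, 1, 1, 3, 2, 2, 1]),
([1, 3, 2, 2], [0, 0, 0, 0, 1, 1, 0, 2, 2, 1, 1, 1, 2, 2, 2, 0]),
([1, 2, 1, 2], [0, 0, 0, 0, 1, 1, 0, 2, 1, 1, 1, 1, 1, 1, 1, 0]),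
([1, 1, 1, 1], [0, 0, 0, 0, 0, 1, 1, 1, 0, 0, 1, 1, 1, 0, 0, 1]),
([1, 2, 2, 2], [0, 0, 0, 0, 1, 1, 1, 2, 1, 1, 1, 1, 2, 1, 1, 0]),
([1, 2, 1, 2], [0, 0, 0, 0, 1, 1, 1, 2, 1, 1, 1, 1, 1, 0, 1, 0]),
([2, 2, 1, 2], [0, 0, 0, 0, 0, 1, 1, 2, 2, 1, 2, 0, 1, 0, 1, 2]),
([1, 3, 1, 2], [0, 0, 0, 0, 0, 1, 1, 2, 2, 1, 1, 1, 1, 0, 2, 1]),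
([2, 2, 1, 2], [0, 0, 0, 0, 0, 1, 1, 2, 1, 1, 2, 1, 1, 0, 1, 2]),
([3, 3, 2, 2], [0, 0, 0, 0, 0, 1, 0, 2, 2, 1, 3, 1, 2, 2, 2, 3]),
([3, 3, 3, 2], [0, 0, 0, 0, 0, 1, 1, 2, 2, 1, 3, 1, 3, 2, 2, 3]),
([2, 2, 1, 1], [0, 0, 0, 0, 0, 1, 0, 1, 1, 0, 2, 1, 1, 1, 1, 2]),
([3, 3, 1, 2], [0, 0, 0, 0, 0, 1, 0, 2, 2, 1, 3, 1, 1, 1, 2, 3]),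
([2, 2, 1, 1], [0, 0, 0, 0, 0, 0, 0, 1, 1, 1, 2, 1, 1, 1, 1, 2]),
([3, 3, 1, 2], [0, 0, 0, 0, 0, 1, 1, 2, 2, 1, 3, 1, 1, 0, 2, 3]),
([2, 2, 1, 1], [0, 0, 0, 0, 0, 1, 1, 1, 1, 0, 2, 1, 1, 0, 1, 2]),
([2, 2, 2, 1], [0, 0, 0, 0, 0, 1, 1, 1, 1, 0, 2, 1, 2, 1, 1, 2]),
([2, 3, 3, 2], [0, 0, 0, 0, 1, 1, 1, 2, 2, 1, 2, 1, 3, 2, 2, 1]),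
([2, 3, 1, 2], [0, 0, 0, 0, 1, 1, 1, 2, 2, 1, 2, 1, 1, 0, 2, 1]),
([2, 2, 1, 1], [0, 0, 0, 0, 0, 0, 1, 1, 1, 1, 2, 1, 1, 0, 1, 2]),
([2, 2, 2, 1], [0, 0, 0, 0, 0, 0, 1, 1, 1, 1, 2, 1, 2, 1, 1, 2]),
([1, 2, 1, 1], [0, 0, 0, 0, 0, 1, 1, 1, 1, 0, 1, 1, 1, 0, 1, 1]),
([1, 3, 1, 2], [0, 0, 0, 0, 1, 1, 1, 2, 2, 1, 1, 1, 1, 0, 2, 0]),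
([1, 2, 1, 1], [0, 0, 0, 0, 1, 0, 0, 1, 1, 1, 1, 1, 1, 1, 1, 0]),
([1, 2, 1, 1], [0, 0, 0, 0, 0, 0, 1, 1, 1, 1, 1, 1, 1, 0, 1, 1]),
([1, 1, 1, 0], [0, 0, 0, 0, 0, 0, 0, 0, 0, 0, 1, 1, 1, 1, 0, 1]),
([1, 2, 1, 1], [0, 0, 0, 0, 1, 1, 1, 1, 1, 0, 1, 1, 1, 0, 1, 0]),
([1, 2, 2, 1], [0, 0, 0, 0, 0, 1, 1, 1, 1, 0, 1, 1, 2, 1, 1, 1]),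
([1, 2, 1, 1], [0, 0, 0, 0, 1, 0, 1, 1, 1, 1, 1, 1, 1, 0, 1, 0]),
([1, 2, 2, 1], [0, 0, 0, 0, 0, 0, 1, 1, 1, 1, 1, 1, 2, 1, 1, 1]),
([1, 3, 3, 2], [0, 0, 0, 0, 1, 1, 1, 2, 2, 1, 1, 1, 3, 2, 2, 0]),
([1, 2, 2, 1], [0, 0, 0, 0, 1, 0, 1, 1, 1, 1, 1, 1, 2, 1, 1, 0]),
([1, 2, 2, 1], [0, 0, 0, 0, 1, 1, 1, 1, 1, 0, 1, 1, 2, 1, 1, 0])]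


def unitL (i : ℕ) : List ℕ := (List.range 16).map fun j => if j = i then 1 else 0

def initR : List Ray := (List.range 16).map fun i => (unitL i, 65535 - 2 ^ i)

def initL : List (List ℕ × List ℕ) := (List.range 16).map fun i => (unitL i, [])

noncomputable def allDiv (c : ℕ) (l : List ℕ) : Bool :=
  List.rec true (fun a _ ih => cond (Nat.beq (Nat.mod a c) 0) ih false) l

noncomputable def okRay (r : Ray) : Bool :=
  cond (Nat.beq (dot [1, 1, 1, 1] r.1) 0) false (allDiv (dot [1, 1, 1, 1] r.1) r.1)

noncomputable def allR (f : Ray → Bool) (l : List Ray) : Bool :=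
  List.rec true (fun x _ ih => cond (f x) ih false) l

set_option maxRecDepth 100000 in
theorem run_ok : steps consL (2 ^ 16) initR (allR okRay) = true := by decide +kernel

theorem allR_iff (f : Ray → Bool) (l : List Ray) : allR f l = true ↔ ∀ r ∈ l, f r = true := by
  induction l with
  | nil => simp [allR]
  | cons y ys ih =>
    have e : allR f (y :: ys) = cond (f y) (allR f ys) false := rfl
    rw [e]
    cases h : f y <;> simp [ih, h]

theorem allDiv_iff (c : ℕ) (l : List ℕ) : allDiv c l = true ↔ ∀ a ∈ l, c ∣ a := by
  induction l with
  | nil => simp [allDiv]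
  | cons y ys ih =>
    have e : allDiv c (y :: ys) = cond (Nat.beq (y % c) 0) (allDiv c ys) false := rfl
    rw [e]
    cases h : Nat.beq (y % c) 0
    · have := Nat.ne_of_beq_eq_false h
      simp [Nat.dvd_iff_mod_eq_zero, this]
    · have := Nat.eq_of_beq_eq_true h
      simp [ih, Nat.dvd_iff_mod_eq_zero, this]

theorem unitL_getD : ∀ i j : Fin 16, (unitL i).getD j 0 = if j = i then 1 else 0 := by decide

theorem vec_unitL (i : Fin 16) : vec (unitL i) = Pi.single i 1 := by
  funext j
  rw [vec, unitL_getD]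
  simp [Pi.single_apply]

theorem lin_unitL (i : Fin 16) (x : Fin 16 → ℝ) : lin (unitL i, []) x = x i := by
  rw [lin_apply]
  simp only [unitL_getD]
  simp

theorem initL_length : initL.length = 16 := rfl

theorem initL_get (j : Fin initL.length) : initL[j] = (unitL j, []) := by
  have : ∀ j : Fin 16, initL[(j : ℕ)]'j.2 = (unitL j, []) := by
    intro j
    simp [initL]
  exact this (Fin.cast initL_length j)

theorem initInv : DDInv initL initR := by
  have hR : ∀ r ∈ initR, ∃ i : Fin 16, r = (unitL i, 65535 - 2 ^ (i : ℕ)) := by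
    intro r hr
    simp only [initR, List.mem_map, List.mem_range] at hr
    obtain ⟨i, hi, rfl⟩ := hr
    exact ⟨⟨i, hi⟩, rfl⟩
  have hl : ∀ (j : Fin initL.length) (x : Fin 16 → ℝ), lin initL[j] x = x (Fin.cast initL_length j) := by
    intro j x
    rw [initL_get]
    exact lin_unitL (Fin.cast initL_length j) x
  refine ⟨?_, ?_, ?_, ?_, ?_, ?_⟩
  · intro r hr
    obtain ⟨i, rfl⟩ := hR r hr
    simp [unitL]
  · intro r hr
    obtain ⟨i, rfl⟩ := hR r hr
    simp [vec_unitL]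
  · intro r hr
    obtain ⟨i, rfl⟩ := hR r hr
    rw [initL_length]
    have : 0 < 2 ^ (i : ℕ) := by positivity
    show 65535 - 2 ^ (i : ℕ) < _
    omega
  · intro r hr j
    obtain ⟨i, rfl⟩ := hR r hr
    rw [hl, vec_unitL]
    simp only [Pi.single_apply]
    split_ifs <;> norm_num
  · intro r hr j
    obtain ⟨i, rfl⟩ := hR r hr
    rw [hl, vec_unitL]
    have : ∀ i j : Fin 16, (65535 - 2 ^ (i : ℕ)).testBit j = true ↔ j ≠ i := by decide
    have := this i (Fin.cast initL_length j)
    refine this.trans ?_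
    simp only [Pi.single_apply]
    split_ifs with h <;> simp [h]
  · intro x hx
    have : x = ∑ i : Fin 16, x i • (Pi.single i 1 : Fin 16 → ℝ) := by
      funext j
      simp [Finset.sum_apply, Pi.single_apply]
    rw [this]
    refine CMem.sum _ _ fun i _ => CMem.smul ?_ ?_
    · have hm : (unitL i, 65535 - 2 ^ (i : ℕ)) ∈ initR := by
        simp only [initR, List.mem_map, List.mem_range]
        exact ⟨i, i.2, rfl⟩
      have := CMem.base (fun r : {r // r ∈ initR} => vec r.1.1) ⟨_, hm⟩
      simp only [vec_unitL] at this
      exact this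
    · have := hx (Fin.cast initL_length.symm i)
      rw [hl] at this
      exact this

theorem cone_desc : ∃ (n : ℕ) (v : Fin n → Fin 16 → ℤ) (typ : Fin n → Fin 4),
    (∀ i (j : Fin 4), v i (Fin.castAdd 12 j) = if j = typ i then 1 else 0) ∧
    ∀ x : Fin 16 → ℝ, ((∀ j, 0 ≤ x j) ∧ ∀ a ∈ consL, 0 ≤ lin a x) ↔
      CMem (fun i j => (v i j : ℝ)) x := by
  obtain ⟨R, hR, hok⟩ := initInv.steps consL (allR okRay) run_ok
  rw [allR_iff] at hok
  have hc : ∀ r ∈ R, 0 < dot [1, 1, 1, 1] r.1 ∧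
      ∀ j : Fin 16, dot [1, 1, 1, 1] r.1 ∣ r.1.getD j 0 := by
    intro r hr
    have := hok r hr
    unfold okRay at this
    cases h : Nat.beq (dot [1, 1, 1, 1] r.1) 0
    · rw [h, cond_false, allDiv_iff] at this
      refine ⟨Nat.pos_of_ne_zero (Nat.ne_of_beq_eq_false h), fun j => this _ ?_⟩
      have hj : (j : ℕ) < r.1.length := by rw [hR.len r hr]; exact j.2
      rw [List.getD_eq_getElem _ _ hj]
      exact List.getElem_mem hj
    · rw [h, cond_true] at this
      cases this
  have hd : ∀ r ∈ R, dot [1, 1, 1, 1] r.1 =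
      r.1.getD 0 0 + r.1.getD 1 0 + r.1.getD 2 0 + r.1.getD 3 0 := by
    intro r hr
    rw [dot_eq 16 _ _ (hR.len r hr)]
    simp [Finset.sum_range_succ]
  -- normalized rays
  let w : Fin R.length → Fin 16 → ℕ := fun i j => R[i].1.getD j 0 / dot [1, 1, 1, 1] R[i].1
  have hwv : ∀ i, vec R[i].1 = (dot [1, 1, 1, 1] R[i].1 : ℝ) • (fun j => (w i j : ℝ)) := by
    intro i
    funext j
    obtain ⟨h1, h2⟩ := hc R[i] (List.getElem_mem _)
    simp only [vec, Pi.smul_apply, smul_eq_mul, w]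
    rw [← Nat.cast_mul, Nat.mul_div_cancel' (h2 j)]
  have htyp : ∀ i, ∃ t : Fin 4, ∀ j : Fin 4, w i (Fin.castAdd 12 j) = if j = t then 1 else 0 := by
    intro i
    obtain ⟨h1, h2⟩ := hc R[i] (List.getElem_mem _)
    have h3 := hd R[i] (List.getElem_mem _)
    have hs : w i 0 + w i 1 + w i 2 + w i 3 = 1 := by
      have e : ∀ j : Fin 16, R[i].1.getD j 0 = dot [1, 1, 1, 1] R[i].1 * w i j := fun j =>
        (Nat.mul_div_cancel' (h2 j)).symm
      have e0 := e 0
      have e1 := e 1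
      have e2 := e 2
      have e3 := e 3
      have : dot [1, 1, 1, 1] R[i].1 * (w i 0 + w i 1 + w i 2 + w i 3)
        = dot [1, 1, 1, 1] R[i].1 * 1 := by
        rw [mul_add, mul_add, mul_add, ← e0, ← e1, ← e2, ← e3, mul_one]
        exact h3.symm
      exact Nat.eq_of_mul_eq_mul_left h1 this
    have : ∃ t : Fin 4, w i (Fin.castAdd 12 t) = 1 := by
      by_contra hcon
      push Not at hcon
      have a0 : w i 0 ≠ 1 := hcon 0
      have a1 : w i 1 ≠ 1 := hcon 1
      have a2 : w i 2 ≠ 1 := hcon 2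
      have a3 : w i 3 ≠ 1 := hcon 3
      omega
    obtain ⟨t, ht⟩ := this
    refine ⟨t, fun j => ?_⟩
    have hs' : ∑ j : Fin 4, w i (Fin.castAdd 12 j) = 1 := by
      rw [Fin.sum_univ_four]; exact hs
    split_ifs with h
    · rw [h, ht]
    · rw [← Finset.add_sum_erase _ _ (Finset.mem_univ t), ht] at hs'
      have : ∑ j ∈ Finset.univ.erase t, w i (Fin.castAdd 12 j) = 0 := by omega
      exact Finset.sum_eq_zero_iff.1 this j (by simp [h])
  choose typ htyp using htyp
  refine ⟨R.length, fun i j => w i j, typ, fun i j => ?_, fun x => ⟨fun hx => ?_, fun hx => ?_⟩⟩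
  · have := htyp i j
    simp only
    rw [this]; simp
  · refine (hR.gen x fun j => ?_).trans ?_
    · have hm : (initL ++ consL)[j] ∈ initL ++ consL := List.getElem_mem _
      rcases List.mem_append.1 hm with h | h
      · generalize (initL ++ consL)[j] = b at h ⊢
        simp only [initL, List.mem_map, List.mem_range] at h
        obtain ⟨i, hi, h⟩ := h
        rw [← h]
        have := lin_unitL ⟨i, hi⟩ x
        rw [this]
        exact hx.1 _
      · exact hx.2 _ h
    · rintro ⟨r, hr⟩
      obtain ⟨i, hi, rfl⟩ := List.mem_iff_getElem.1 hr
      have := hwv ⟨i, hi⟩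
      simp only [Fin.getElem_fin] at this
      simp only
      rw [this]
      have := CMem.base (fun i j => ((w i j : ℤ) : ℝ)) ⟨i, hi⟩
      simp only [Int.cast_natCast] at this ⊢
      exact this.smul (Nat.cast_nonneg _)
  · obtain ⟨c, hc0, rfl⟩ := hx
    refine ⟨fun j => ?_, fun a ha => ?_⟩
    · simp only [Finset.sum_apply, Pi.smul_apply, smul_eq_mul]
      exact Finset.sum_nonneg fun i _ => mul_nonneg (hc0 i) (by positivity)
    · rw [map_sum]
      refine Finset.sum_nonneg fun i _ => ?_
      rw [map_smul, smul_eq_mul]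
      refine mul_nonneg (hc0 i) ?_
      have hpos := (hc R[i] (List.getElem_mem _)).1
      obtain ⟨j, hj, hja⟩ := List.mem_iff_getElem.1 (List.mem_append_right initL ha)
      have := hR.nn R[i] (List.getElem_mem _) ⟨j, hj⟩
      simp only [Fin.getElem_fin] at this
      rw [hja] at this
      have h2 := hwv i
      simp only [Fin.getElem_fin] at h2
      rw [h2, map_smul, smul_eq_mul] at this
      have h3 : (0 : ℝ) < dot [1, 1, 1, 1] R[i].1 := by exact_mod_cast hpos
      have := nonneg_of_mul_nonneg_right this h3
      simpa using this


section tri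
variable {κ : Type} [Fintype κ] {n : ℕ}

theorem exists_weights (F : Finset (Fin n → ℝ)) (hF : ∀ a ∈ F, a ≠ 0) :
    ∃ w : Fin n → ℝ, (∀ i, 0 < w i) ∧ ∀ a ∈ F, ∑ j, a j * w j ≠ 0 := by
  classical
  let P : (Fin n → ℝ) → Polynomial ℝ := fun a => ∑ j : Fin n, Polynomial.C (a j) * Polynomial.X ^ (j : ℕ)
  have hP : ∀ a ∈ F, P a ≠ 0 := by
    intro a ha h0
    apply hF a ha
    funext i
    have := congrArg (fun p => p.coeff (i : ℕ)) h0
    simpa [P, Polynomial.finsetSum_coeff, Polynomial.coeff_C_mul_X_pow, Fin.val_inj] using this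
  have hQ : ∏ a ∈ F, P a ≠ 0 := Finset.prod_ne_zero_iff.2 hP
  obtain ⟨t, ht, ht2⟩ := (Set.Ioi_infinite (0 : ℝ)).exists_notMem_finset (∏ a ∈ F, P a).roots.toFinset
  refine ⟨fun i => t ^ (i : ℕ), fun i => pow_pos ht _, fun a ha h0 => ht2 ?_⟩
  rw [Multiset.mem_toFinset, Polynomial.mem_roots hQ, Polynomial.IsRoot, Polynomial.eval_prod]
  refine Finset.prod_eq_zero ha ?_
  simpa [P, Polynomial.eval_finsetSum] using h0

/-- `B` indexes a basis among the `V i`, with coordinate map `c`. -/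
structure IsB (V : Fin n → κ → ℝ) (B : Finset (Fin n)) (c : (κ → ℝ) →ₗ[ℝ] (Fin n → ℝ)) : Prop where
  rep : ∀ y, ∑ i, c y i • V i = y
  supp : ∀ y, ∀ i ∉ B, c y i = 0
  uniq : ∀ l : Fin n → ℝ, (∀ i ∉ B, l i = 0) → c (∑ i, l i • V i) = l

theorem exists_isB (V : Fin n → κ → ℝ) (hV : Submodule.span ℝ (Set.range V) = ⊤)
    (s : Set (Fin n)) (hs : LinearIndepOn ℝ V s) :
    ∃ (B : Finset (Fin n)), s ⊆ B ∧ LinearIndepOn ℝ V B ∧ ∃ c, IsB V B c := by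
  classical
  obtain ⟨b, -, hsb, hspan, hli⟩ := exists_linearIndepOn_extension hs (Set.subset_univ s)
  refine ⟨b.toFinset, by simpa using hsb, by simpa using hli, ?_⟩
  have htop : ⊤ ≤ Submodule.span ℝ (Set.range fun i : b => V i) := by
    rw [← hV, Submodule.span_le]
    rw [Set.image_univ, Set.image_eq_range] at hspan
    exact hspan
  let bs := Module.Basis.mk hli htop
  have hbs : ∀ i : b, bs i = V i := fun i => Module.Basis.mk_apply hli htop i
  let c : (κ → ℝ) →ₗ[ℝ] (Fin n → ℝ) :=
    (LinearMap.pi fun i => if h : i ∈ b then LinearMap.proj (⟨i, h⟩ : b) else 0) ∘ₗ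
      bs.equivFun.toLinearMap
  have hc : ∀ y (i : b), c y i = bs.equivFun y i := by
    intro y i
    simp [c]
  have hc0 : ∀ y, ∀ i ∉ b, c y i = 0 := by
    intro y i hi
    simp [c, hi]
  have hsum : ∀ l : Fin n → ℝ, (∀ i ∉ b, l i = 0) → ∑ i, l i • V i = ∑ i : b, l i • V i := by
    intro l hl
    rw [← Finset.sum_subset (Finset.subset_univ b.toFinset)]
    · exact Finset.sum_subtype _ (by simp) _
    · intro i _ hi
      rw [hl i (by simpa using hi), zero_smul]
  refine ⟨c, ⟨fun y => ?_, fun y i hi => hc0 y i (by simpa using hi), fun l hl => ?_⟩⟩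
  · rw [hsum _ (hc0 y)]
    simp only [hc]
    have := bs.sum_equivFun y
    simp only [hbs] at this
    exact this
  · have hl' : ∀ i ∉ b, l i = 0 := fun i hi => hl i (by simpa using hi)
    funext i
    by_cases hi : i ∈ b
    · have h2 : ∑ i, l i • V i = ∑ i : b, l i • bs i := by
        rw [hsum l hl']
        simp only [hbs]
      rw [h2, hc _ ⟨i, hi⟩, bs.equivFun_apply, map_sum]
      simp [Finsupp.single_apply, Finset.sum_apply']
    · rw [hl' i hi, hc0 _ i hi]

/-- coordinates with respect to a basis -/
noncomputable def crd (V : Fin n → κ → ℝ) (B : Finset (Fin n)) : (κ → ℝ) →ₗ[ℝ] (Fin n → ℝ) :=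
  open Classical in if h : ∃ c, IsB V B c then h.choose else 0

theorem crd_isB {V : Fin n → κ → ℝ} {B : Finset (Fin n)} (h : ∃ c, IsB V B c) : IsB V B (crd V B) := by
  rw [crd, dif_pos h]
  exact h.choose_spec

theorem IsB.self {V : Fin n → κ → ℝ} {B : Finset (Fin n)} {c : (κ → ℝ) →ₗ[ℝ] (Fin n → ℝ)}
    (h : IsB V B c) {b : Fin n} (hb : b ∈ B) : c (V b) = Pi.single b 1 := by
  classical
  have := h.uniq (Pi.single b 1) (fun i hi => by
    rw [Pi.single_apply, if_neg]; rintro rfl; exact hi hb)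
  simpa [Pi.single_apply] using this

def HH (V : Fin n → κ → ℝ) (q : κ → ℝ) (B : Finset (Fin n)) (x : κ → ℝ) : Prop :=
  ∀ b ∈ B, 0 < crd V B x b ∨ (crd V B x b = 0 ∧ 0 < crd V B q b)

/-- small perturbation keeps coordinates nonnegative -/
theorem exists_small (l m : Fin n → ℝ) (h : ∀ i, 0 < l i ∨ (l i = 0 ∧ 0 ≤ m i)) :
    ∃ s > 0, ∀ i, 0 ≤ l i + s * m i := by
  have : ∀ i, ∀ᶠ s in nhdsWithin (0 : ℝ) (Set.Ioi 0), 0 ≤ l i + s * m i := by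
    intro i
    rcases h i with h | ⟨h, h'⟩
    · have hc : Filter.Tendsto (fun s : ℝ => l i + s * m i) (nhdsWithin 0 (Set.Ioi 0)) (nhds (l i)) := by
        have : Continuous fun s : ℝ => l i + s * m i := by fun_prop
        have := this.tendsto 0
        simp only [zero_mul, add_zero] at this
        exact this.mono_left nhdsWithin_le_nhds
      exact (hc.eventually (lt_mem_nhds h)).mono fun s hs => hs.le
    · filter_upwards [self_mem_nhdsWithin] with s hs
      rw [h, zero_add]
      exact mul_nonneg (le_of_lt hs) h'
  have := ((Filter.eventually_all.2 this).and self_mem_nhdsWithin).exists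
  obtain ⟨s, hs, h0⟩ := this
  exact ⟨s, h0, hs⟩

theorem exists_eps (V : Fin n → κ → ℝ) (q x : κ → ℝ) (hq : ∀ B, (∃ c, IsB V B c) → ∀ b ∈ B, crd V B q b ≠ 0) :
    ∃ e : ℝ, 0 < e ∧ ∀ B, (∃ c, IsB V B c) → ∀ b ∈ B, crd V B (x + e • q) b ≠ 0 ∧
      (0 < crd V B (x + e • q) b ↔ 0 < crd V B x b ∨ (crd V B x b = 0 ∧ 0 < crd V B q b)) := by
  have : ∀ B, ∀ b, ∀ᶠ e in nhdsWithin (0 : ℝ) (Set.Ioi 0), (∃ c, IsB V B c) → b ∈ B →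
      crd V B (x + e • q) b ≠ 0 ∧
      (0 < crd V B (x + e • q) b ↔ 0 < crd V B x b ∨ (crd V B x b = 0 ∧ 0 < crd V B q b)) := by
    intro B b
    by_cases hB : ∃ c, IsB V B c
    swap
    · exact Filter.Eventually.of_forall fun e h => absurd h hB
    by_cases hb : b ∈ B
    swap
    · exact Filter.Eventually.of_forall fun e _ h => absurd h hb
    have hq0 := hq B hB b hb
    simp only [map_add, map_smul, Pi.add_apply, Pi.smul_apply, smul_eq_mul]
    generalize crd V B q b = β at *
    generalize crd V B x b = α at *
    have hc : Filter.Tendsto (fun s : ℝ => α + s * β) (nhdsWithin 0 (Set.Ioi 0)) (nhds α) := by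
      have : Continuous fun s : ℝ => α + s * β := by fun_prop
      have := this.tendsto 0
      simp only [zero_mul, add_zero] at this
      exact this.mono_left nhdsWithin_le_nhds
    rcases lt_trichotomy α 0 with h | h | h
    · filter_upwards [hc.eventually (gt_mem_nhds h)] with s hs _ _
      exact ⟨hs.ne, by constructor
                       · intro h2; linarith
                       · rintro (h2 | ⟨h2, -⟩) <;> linarith⟩
    · filter_upwards [self_mem_nhdsWithin] with s hs _ _
      have hs' : 0 < s := hs
      subst h
      simp only [zero_add, lt_irrefl, false_or, true_and]
      exact ⟨mul_ne_zero hs'.ne' hq0, mul_pos_iff_of_pos_left hs'⟩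
    · filter_upwards [hc.eventually (lt_mem_nhds h)] with s hs _ _
      exact ⟨hs.ne', by simp [hs, h]⟩
  have := ((Filter.eventually_all.2 fun B => Filter.eventually_all.2 (this B)).and
    self_mem_nhdsWithin).exists
  obtain ⟨s, hs, h0⟩ := this
  exact ⟨s, h0, fun B hB b hb => hs B b hB hb⟩

theorem tri (V : Fin n → κ → ℝ) (hV : Submodule.span ℝ (Set.range V) = ⊤)
    (h : (κ → ℝ) →ₗ[ℝ] ℝ) (hpos : ∀ i, 0 < h (V i)) :
    ∃ (w : Fin n → ℝ) (G : Finset (Finset (Fin n))), (∀ i, 0 < w i) ∧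
      (∀ B ∈ G, IsB V B (crd V B)) ∧
      (∀ B ∈ G, ∀ b ∈ B, crd V B (∑ i, w i • V i) b ≠ 0) ∧
      (∀ x, CMem V x ↔ ∃ B ∈ G, HH V (∑ i, w i • V i) B x) ∧
      (∀ x, ∀ B ∈ G, ∀ B' ∈ G, HH V (∑ i, w i • V i) B x → HH V (∑ i, w i • V i) B' x → B = B') := by
  classical
  -- generic weights
  let F : Finset (Fin n → ℝ) :=
    ((Finset.univ : Finset (Finset (Fin n) × Fin n)).filter (fun p => (∃ c, IsB V p.1 c) ∧ p.2 ∉ p.1)).image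
      (fun p => Pi.single p.2 1 - crd V p.1 (V p.2)) ∪
    ((Finset.univ : Finset (Finset (Fin n) × Fin n)).filter (fun p => (∃ c, IsB V p.1 c) ∧ p.2 ∈ p.1)).image
      (fun p => fun i => crd V p.1 (V i) p.2)
  obtain ⟨w, hw, hwF⟩ := exists_weights F (by
    intro a ha h0
    rcases Finset.mem_union.1 ha with ha | ha
    · obtain ⟨⟨B, i⟩, hp, rfl⟩ := Finset.mem_image.1 ha
      obtain ⟨hB, hi⟩ := (Finset.mem_filter.1 hp).2
      have := congrFun h0 i
      simp [(crd_isB hB).supp _ i hi] at this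
    · obtain ⟨⟨B, i⟩, hp, rfl⟩ := Finset.mem_image.1 ha
      obtain ⟨hB, hi⟩ := (Finset.mem_filter.1 hp).2
      have := congrFun h0 i
      simp [(crd_isB hB).self hi] at this)
  have hw1 : ∀ B, (∃ c, IsB V B c) → ∀ i ∉ B, w i ≠ ∑ j, crd V B (V i) j * w j := by
    intro B hB i hi h0
    apply hwF (Pi.single i 1 - crd V B (V i))
    · refine Finset.mem_union_left _ (Finset.mem_image.2 ⟨(B, i), ?_, rfl⟩)
      simp [hB, hi]
    · simp [sub_mul, Finset.sum_sub_distrib, ← h0, Pi.single_apply]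
  have hw2 : ∀ B, (∃ c, IsB V B c) → ∀ b ∈ B, crd V B (∑ i, w i • V i) b ≠ 0 := by
    intro B hB b hb h0
    apply hwF (fun i => crd V B (V i) b)
    · refine Finset.mem_union_right _ (Finset.mem_image.2 ⟨(B, b), ?_, rfl⟩)
      simp [hB, hb]
    · rw [map_sum, Finset.sum_apply] at h0
      simpa [mul_comm] using h0
  generalize hqd : (∑ i, w i • V i) = q at hw2 ⊢
  let G : Finset (Finset (Fin n)) := Finset.univ.filter fun B =>
    (∃ c, IsB V B c) ∧ ∀ i ∉ B, w i < ∑ j, crd V B (V i) j * w j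
  have hG : ∀ B, B ∈ G ↔ (∃ c, IsB V B c) ∧ ∀ i ∉ B, w i < ∑ j, crd V B (V i) j * w j := by
    intro B; simp [G]
  have hq : CMem V q := ⟨w, fun i => (hw i).le, hqd⟩
  have hcm : ∀ B, (∃ c, IsB V B c) → ∀ y, (∀ b ∈ B, 0 ≤ crd V B y b) → CMem V y := by
    intro B hB y hy
    refine ⟨crd V B y, fun i => ?_, (crd_isB hB).rep y⟩
    by_cases hi : i ∈ B
    · exact hy i hi
    · rw [(crd_isB hB).supp y i hi]
  -- the value of a representation
  have hval : ∀ B, (∃ c, IsB V B c) → ∀ l : Fin n → ℝ, 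
      ∑ i, l i * w i = ∑ i, crd V B (∑ i, l i • V i) i * w i +
        ∑ i, l i * (w i - ∑ j, crd V B (V i) j * w j) := by
    intro B hB l
    rw [map_sum]
    simp only [Finset.sum_apply, map_smul, Pi.smul_apply, smul_eq_mul, mul_sub,
      Finset.sum_sub_distrib, Finset.sum_mul, Finset.mul_sum]
    rw [Finset.sum_comm]
    simp only [mul_assoc]
    ring
  have hopt : ∀ B ∈ G, ∀ l : Fin n → ℝ, (∀ i, 0 ≤ l i) →
      ∑ i, l i * w i ≤ ∑ i, crd V B (∑ i, l i • V i) i * w i ∧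
      (∑ i, l i * w i = ∑ i, crd V B (∑ i, l i • V i) i * w i → ∀ i ∉ B, l i = 0) := by
    intro B hB l hl
    obtain ⟨hB, hgood⟩ := (hG B).1 hB
    have hself : ∀ i ∈ B, w i - ∑ j, crd V B (V i) j * w j = 0 := by
      intro i hi
      rw [(crd_isB hB).self hi]
      simp [Pi.single_apply]
    have hterm : ∀ i ∈ Finset.univ, l i * (w i - ∑ j, crd V B (V i) j * w j) ≤ 0 := by
      intro i _
      by_cases hi : i ∈ B
      · rw [hself i hi, mul_zero]
      · exact mul_nonpos_of_nonneg_of_nonpos (hl i) (sub_neg.2 (hgood i hi)).le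
    have hv := hval B hB l
    have hs := Finset.sum_nonpos hterm
    refine ⟨by linarith, fun he i hi => ?_⟩
    have : ∑ i, l i * (w i - ∑ j, crd V B (V i) j * w j) = 0 := by linarith
    have := (Finset.sum_eq_zero_iff_of_nonpos hterm).1 this i (Finset.mem_univ _)
    rcases mul_eq_zero.1 this with h1 | h1
    · exact h1
    · exact absurd h1 (sub_neg.2 (hgood i hi)).ne
  refine ⟨w, G, hw, fun B hB => crd_isB ((hG B).1 hB).1, ?_, ?_, ?_⟩
  · rw [hqd]
    exact fun B hB => hw2 B ((hG B).1 hB).1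
  · rw [hqd]
    intro x
    constructor
    · intro hx
      obtain ⟨e, he, heB⟩ := exists_eps V q x hw2
      have hy : CMem V (x + e • q) := hx.add (hq.smul he.le)
      generalize x + e • q = y at heB hy
      obtain ⟨l, ⟨hl0, hly⟩, hmax⟩ := (coeff_compact V h hpos y).exists_isMaxOn hy
        (f := fun l => ∑ i, l i * w i) (by fun_prop)
      rw [isMaxOn_iff] at hmax
      -- perturbation principle
      have hpert : ∀ B, (∃ c, IsB V B c) → ∀ i ∉ B, ∀ t : ℝ,
          (∀ j, 0 < l j ∨ (l j = 0 ∧ 0 ≤ t * (Pi.single i 1 - crd V B (V i) : Fin n → ℝ) j)) →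
          t * (w i - ∑ j, crd V B (V i) j * w j) ≤ 0 := by
        intro B hB i hi t ht
        obtain ⟨s, hs, hs2⟩ := exists_small l
          (fun j => t * (Pi.single i 1 - crd V B (V i) : Fin n → ℝ) j) ht
        have := hmax (fun j => l j + s * (t * (Pi.single i 1 - crd V B (V i) : Fin n → ℝ) j))
          ⟨hs2, by
            simp only [add_smul, Finset.sum_add_distrib, hly, mul_smul, ← Finset.smul_sum,
              Pi.sub_apply, sub_smul, Finset.sum_sub_distrib, (crd_isB hB).rep]
            simp [Pi.single_apply]⟩
        simp only [add_mul, Finset.sum_add_distrib, mul_assoc, ← Finset.mul_sum, Pi.sub_apply,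
          sub_mul, Finset.sum_sub_distrib] at this
        have h3 : ∑ j, (Pi.single i 1 : Fin n → ℝ) j * w j = w i := by simp [Pi.single_apply]
        rw [h3] at this
        have : s * (t * (w i - ∑ j, crd V B (V i) j * w j)) ≤ 0 := by linarith
        by_contra hcon
        push Not at hcon
        have := mul_pos hs hcon
        linarith
      -- support is linearly independent
      let S : Set (Fin n) := {i | 0 < l i}
      have hSmem : ∀ i, i ∈ S ↔ 0 < l i := fun i => Iff.rfl
      obtain ⟨I, hIS, -, hspan, hli⟩ := exists_linearIndepOn_extension
        (linearIndepOn_empty ℝ V) (Set.empty_subset S)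
      obtain ⟨B, hIB, hliB, hB⟩ := exists_isB V hV I hli
      have hcb := crd_isB hB
      have hSB : ∀ i, i ∉ B → l i = 0 := by
        intro i hiB
        by_contra hli0
        have hiS : i ∈ S := (hSmem i).2 (lt_of_le_of_ne (hl0 i) (Ne.symm hli0))
        have hsp := hspan (Set.mem_image_of_mem V hiS)
        have hcI : ∀ j ∉ I, crd V B (V i) j = 0 := by
          intro j hj
          have : ∀ z ∈ Submodule.span ℝ (V '' I), crd V B z j = 0 := by
            intro z hz
            induction hz using Submodule.span_induction with
            | mem z hz =>
              obtain ⟨k, hk, rfl⟩ := hz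
              rw [hcb.self (hIB hk), Pi.single_apply, if_neg]
              rintro rfl; exact hj hk
            | zero => simp
            | add a b _ _ ha hb => simp [ha, hb]
            | smul t a _ ha => simp [ha]
          exact this _ hsp
        have hz : ∀ t : ℝ, ∀ j, 0 < l j ∨ (l j = 0 ∧ 0 ≤ t * (Pi.single i 1 - crd V B (V i) : Fin n → ℝ) j) := by
          intro t j
          by_cases hj : j ∈ S
          · exact Or.inl hj
          · right
            have hjI : j ∉ I := fun hh => hj (hIS hh)
            have hji : j ≠ i := by rintro rfl; exact hj hiS
            refine ⟨le_antisymm (not_lt.1 hj) (hl0 j), ?_⟩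
            simp [hcI j hjI, hji]
        have h1 := hpert B hB i hiB 1 (hz 1)
        have h2 := hpert B hB i hiB (-1) (hz (-1))
        exact hw1 B hB i hiB (by linarith)
      have hcl : crd V B y = l := by
        rw [← hly]; exact hcb.uniq l hSB
      have hpos' : ∀ b ∈ B, 0 < l b := by
        intro b hb
        refine lt_of_le_of_ne (hl0 b) (Ne.symm ?_)
        rw [← hcl]
        exact (heB B hB b hb).1
      refine ⟨B, (hG B).2 ⟨hB, fun i hi => ?_⟩, fun b hb => ?_⟩
      · refine lt_of_le_of_ne ?_ (hw1 B hB i hi)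
        have := hpert B hB i hi 1 (fun j => by
          by_cases hj : j ∈ B
          · exact Or.inl (hpos' j hj)
          · right
            refine ⟨hSB j hj, ?_⟩
            simp only [one_mul, Pi.sub_apply, hcb.supp _ j hj, sub_zero, Pi.single_apply]
            split_ifs <;> norm_num)
        linarith
      · refine ((heB B hB b hb).2).1 ?_
        rw [hcl]; exact hpos' b hb
    · rintro ⟨B, hB, hx⟩
      refine hcm B ((hG B).1 hB).1 x fun b hb => ?_
      rcases hx b hb with h1 | h1
      · exact h1.le
      · exact h1.1.ge
  · rw [hqd]
    intro x B hB B' hB' hx hx'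
    obtain ⟨e, he, heB⟩ := exists_eps V q x hw2
    generalize x + e • q = y at heB
    have hBb := ((hG B).1 hB).1
    have hBb' := ((hG B').1 hB').1
    have p1 : ∀ b ∈ B, 0 < crd V B y b := fun b hb => ((heB B hBb b hb).2).2 (hx b hb)
    have p2 : ∀ b ∈ B', 0 < crd V B' y b := fun b hb => ((heB B' hBb' b hb).2).2 (hx' b hb)
    have n1 : ∀ b, 0 ≤ crd V B y b := fun b => by
      by_cases hb : b ∈ B
      · exact (p1 b hb).le
      · exact ((crd_isB hBb).supp y b hb).ge
    have n2 : ∀ b, 0 ≤ crd V B' y b := fun b => by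
      by_cases hb : b ∈ B'
      · exact (p2 b hb).le
      · exact ((crd_isB hBb').supp y b hb).ge
    have o1 := hopt B hB _ n2
    have o2 := hopt B' hB' _ n1
    rw [(crd_isB hBb').rep] at o1
    rw [(crd_isB hBb).rep] at o2
    have e1 := o1.2 (le_antisymm o1.1 o2.1)
    have e2 := o2.2 (le_antisymm o2.1 o1.1)
    ext b
    constructor
    · intro hb
      by_contra hb'
      exact (p1 b hb).ne' (e2 b hb')
    · intro hb
      by_contra hb'
      exact (p2 b hb).ne' (e1 b hb')

end tri


section count

theorem card_piAntidiag_nat {n : ℕ} (s : Finset (Fin n)) (a : ℕ) :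
    (Finset.piAntidiag s a).card = (s.card + a - 1).choose a := by
  rw [← Finset.card_finsuppAntidiag_nat_eq_choose]
  symm
  refine Finset.card_nbij (fun f => (f : Fin n → ℕ)) ?_ ?_ ?_
  · intro f hf
    rw [Finset.mem_coe, Finset.mem_finsuppAntidiag] at hf
    rw [Finset.mem_coe, Finset.mem_piAntidiag]
    exact ⟨hf.1, fun i hi => hf.2 (Finsupp.mem_support_iff.2 hi)⟩
  · intro f _ g _ h
    exact DFunLike.coe_injective h
  · intro f hf
    have hf := Finset.mem_piAntidiag.1 (Finset.mem_coe.1 hf)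
    refine ⟨Finsupp.equivFunOnFinite.symm f, ?_, by simp⟩
    rw [Finset.mem_coe, Finset.mem_finsuppAntidiag]
    exact ⟨by simpa using hf.1, fun i hi => hf.2 i (by simpa using hi)⟩

/-- the polynomial counting compositions -/
noncomputable def cp (i : Fin 4) (m : ℕ) (d : ℤ) : MvPolynomial (Fin 4) ℚ :=
  MvPolynomial.C (1 / ((m - 1).factorial : ℚ)) *
    ∏ s ∈ Finset.range (m - 1), (MvPolynomial.X i + MvPolynomial.C ((s : ℚ) + 1 - d))

theorem cp_deg (i : Fin 4) (m : ℕ) (d : ℤ) : (cp i m d).totalDegree ≤ m - 1 := by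
  refine (MvPolynomial.totalDegree_mul _ _).trans ?_
  rw [MvPolynomial.totalDegree_C, zero_add]
  refine (MvPolynomial.totalDegree_finsetProd _ _).trans ?_
  refine (Finset.sum_le_card_nsmul _ _ 1 fun s _ => ?_).trans (by simp)
  refine (MvPolynomial.totalDegree_add _ _).trans ?_
  rw [MvPolynomial.totalDegree_C, MvPolynomial.totalDegree_X]
  simp

theorem cp_eval (i : Fin 4) (m : ℕ) (d : ℤ) (hd0 : 0 ≤ d) (hd : d < m) (k : Fin 4 → ℤ) (hk : 0 ≤ k i) :
    MvPolynomial.eval (fun i => (k i : ℚ)) (cp i m d) =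
      if d ≤ k i then (((m + (k i - d).toNat - 1).choose (k i - d).toNat : ℕ) : ℚ) else 0 := by
  unfold cp
  simp only [map_mul, MvPolynomial.eval_C, MvPolynomial.eval_prod, map_add, MvPolynomial.eval_X]
  split_ifs with h
  · obtain ⟨a, ha⟩ := Int.eq_ofNat_of_zero_le (sub_nonneg.2 h)
    obtain ⟨M, rfl⟩ : ∃ M, m = M + 1 := ⟨m - 1, by omega⟩
    rw [ha]
    have e1 : ∀ s ∈ Finset.range (M + 1 - 1), ((k i : ℚ) + ((s : ℚ) + 1 - d)) = ((a + 1 + s : ℕ) : ℚ) := by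
      intro s _
      have : (k i : ℚ) - d = a := by exact_mod_cast ha
      push_cast
      linarith
    rw [Finset.prod_congr rfl e1, ← Nat.cast_prod]
    simp only [Nat.add_sub_cancel, Int.toNat_natCast]
    rw [← Nat.ascFactorial_eq_prod_range, Nat.ascFactorial_eq_factorial_mul_choose]
    have e2 : M + 1 + a - 1 = a + M := by omega
    rw [e2, ← Nat.choose_symm_of_eq_add (show a + M = a + M from rfl)]
    have : ((M.factorial : ℕ) : ℚ) ≠ 0 := by exact_mod_cast M.factorial_ne_zero
    push_cast
    field_simp
  · apply mul_eq_zero_of_right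
    refine Finset.prod_eq_zero (i := (d - k i - 1).toNat) ?_ ?_
    · rw [Finset.mem_range]; omega
    · have : ((d - k i - 1).toNat : ℤ) = d - k i - 1 := Int.toNat_of_nonneg (by omega)
      have h2 : (((d - k i - 1).toNat : ℕ) : ℚ) = d - k i - 1 := by exact_mod_cast this
      rw [h2]; ring

/-- half-open integer part -/
noncomputable def fl (s : Prop) (a : ℝ) : ℤ := open Classical in if s then ⌊a⌋ else ⌈a⌉ - 1

theorem fl_add (s : Prop) (a : ℝ) (m : ℤ) : fl s (a + m) = fl s a + m := by
  unfold fl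
  split_ifs
  · simp
  · rw [Int.ceil_add_intCast]; ring

theorem fl_nonneg (s : Prop) (a : ℝ) : 0 ≤ fl s a ↔ 0 < a ∨ (a = 0 ∧ s) := by
  unfold fl
  split_ifs with h
  · rw [Int.floor_nonneg, le_iff_lt_or_eq]
    simp [h, eq_comm]
  · rw [sub_nonneg, Int.one_le_ceil_iff]
    simp [h]

theorem fl_zero (s : Prop) (a : ℝ) (h : fl s a = 0) : 0 ≤ a ∧ a ≤ 1 ∧ (s → a < 1) := by
  unfold fl at h
  split_ifs at h with hs
  · rw [Int.floor_eq_zero_iff] at h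
    exact ⟨h.1, h.2.le, fun _ => h.2⟩
  · have h1 : ⌈a⌉ = 1 := by omega
    rw [Int.ceil_eq_iff] at h1
    norm_num at h1
    exact ⟨h1.1.le, h1.2, fun h => absurd h hs⟩

theorem count_basis {n : ℕ} (v : Fin n → Fin 16 → ℤ) (typ : Fin n → Fin 4)
    (hv : ∀ i (j : Fin 4), v i (Fin.castAdd 12 j) = if j = typ i then 1 else 0)
    (B : Finset (Fin n)) (c : (Fin 16 → ℝ) →ₗ[ℝ] (Fin n → ℝ))
    (hc : IsB (fun i j => (v i j : ℝ)) B c) (q : Fin 16 → ℝ)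
    (hq : ∀ j : Fin 4, 0 < q (Fin.castAdd 12 j)) :
    ∃ f : MvPolynomial (Fin 4) ℚ, f.totalDegree ≤ 12 ∧ ∀ k : Fin 4 → ℤ, (∀ i, 0 ≤ k i) →
      {x : Fin 16 → ℤ | (∀ j : Fin 4, x (Fin.castAdd 12 j) = k j) ∧
        ∀ b ∈ B, 0 < c (fun j => (x j : ℝ)) b ∨ (c (fun j => (x j : ℝ)) b = 0 ∧ 0 < c q b)}.Finite ∧
      ({x : Fin 16 → ℤ | (∀ j : Fin 4, x (Fin.castAdd 12 j) = k j) ∧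
        ∀ b ∈ B, 0 < c (fun j => (x j : ℝ)) b ∨ (c (fun j => (x j : ℝ)) b = 0 ∧ 0 < c q b)}.ncard : ℚ)
        = MvPolynomial.eval (fun i => (k i : ℚ)) f := by
  classical
  let Bi : Fin 4 → Finset (Fin n) := fun j => B.filter fun b => j = typ b
  have hBi : ∀ j b, b ∈ Bi j ↔ b ∈ B ∧ j = typ b := fun j b => by simp [Bi]
  -- degrees
  have hdeg : ∀ (y : Fin 16 → ℝ) (j : Fin 4), y (Fin.castAdd 12 j) = ∑ b ∈ Bi j, c y b := by
    intro y j
    have h1 := congrFun (hc.rep y) (Fin.castAdd 12 j)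
    rw [Finset.sum_apply] at h1
    rw [← h1]
    simp only [Pi.smul_apply, smul_eq_mul, hv]
    rw [← Finset.sum_subset (Finset.subset_univ (Bi j))]
    · refine Finset.sum_congr rfl fun b hb => ?_
      rw [if_pos ((hBi j b).1 hb).2]; simp
    · intro b _ hb
      by_cases hbB : b ∈ B
      · rw [if_neg fun h => hb ((hBi j b).2 ⟨hbB, h⟩)]; simp
      · rw [hc.supp y b hbB, zero_mul]
  have hweak : ∀ j, ∃ b ∈ Bi j, 0 < c q b := by
    intro j
    by_contra hcon
    push Not at hcon
    have := Finset.sum_nonpos hcon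
    rw [← hdeg] at this
    exact absurd (hq j) (not_lt.2 this)
  have hm : ∀ j, 0 < (Bi j).card := fun j => by
    obtain ⟨b, hb, _⟩ := hweak j
    exact Finset.card_pos.2 ⟨b, hb⟩
  -- cardinality of B
  have hcardB : B.card ≤ 16 := by
    let f : (B → ℝ) →ₗ[ℝ] (Fin 16 → ℝ) :=
      Fintype.linearCombination ℝ (fun b : B => (fun j => (v b j : ℝ) : Fin 16 → ℝ))
    have hf : Function.Injective f := by
      have key : ∀ l : B → ℝ, ∀ b : B, c (f l) b = l b := by
        intro l b
        let l' : Fin n → ℝ := fun i => if h : i ∈ B then l ⟨i, h⟩ else 0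
        have e : f l = ∑ i, l' i • (fun j => (v i j : ℝ) : Fin 16 → ℝ) := by
          rw [← Finset.sum_subset (Finset.subset_univ B)]
          · rw [Fintype.linearCombination_apply, ← Finset.sum_coe_sort B]
            exact Finset.sum_congr rfl fun b _ => by simp [l']
          · intro i _ hi
            simp [l', hi]
        rw [e, hc.uniq l' (fun i hi => by simp [l', hi])]
        simp [l']
      intro l l' h
      funext b
      rw [← key l b, h, key l' b]
    have := LinearMap.finrank_le_finrank_of_injective hf
    simpa using this
  have hcard4 : ∑ j, (Bi j).card = B.card := by
    rw [Finset.card_eq_sum_card_fiberwise (f := typ) (t := Finset.univ) (fun _ _ => by simp)]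
    exact Finset.sum_congr rfl fun j _ => by simp only [Bi, eq_comm]
  -- the box
  let box : Set (Fin 16 → ℤ) := {r | ∀ b ∈ B, fl (0 < c q b) (c (fun j => (r j : ℝ)) b) = 0}
  have hbox : ∀ r, r ∈ box ↔ ∀ b ∈ B, fl (0 < c q b) (c (fun j => (r j : ℝ)) b) = 0 := fun r => Iff.rfl
  have hboxfin : box.Finite := by
    have hsub : box ⊆ Set.Icc (fun j => - ∑ b, |v b j|) (fun j => ∑ b, |v b j|) := by
      intro r hr
      have : ∀ j, |r j| ≤ ∑ b, |v b j| := by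
        intro j
        have h1 := congrFun (hc.rep (fun j => (r j : ℝ))) j
        rw [Finset.sum_apply] at h1
        have : |(r j : ℝ)| ≤ ∑ b, |(v b j : ℝ)| := by
          rw [← h1]
          refine (Finset.abs_sum_le_sum_abs _ _).trans (Finset.sum_le_sum fun b _ => ?_)
          simp only [Pi.smul_apply, smul_eq_mul, abs_mul]
          refine mul_le_of_le_one_left (abs_nonneg _) ?_
          by_cases hb : b ∈ B
          · have := fl_zero _ _ (hr b hb)
            rw [abs_le]; constructor <;> linarith [this.1, this.2.1]
          · rw [hc.supp _ b hb]; simp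
        exact_mod_cast this
      exact ⟨fun j => (abs_le.1 (this j)).1, fun j => (abs_le.1 (this j)).2⟩
    exact (Set.finite_Icc _ _).subset hsub
  have hboxdeg : ∀ r ∈ box, ∀ j : Fin 4, 0 ≤ r (Fin.castAdd 12 j) ∧
      r (Fin.castAdd 12 j) < (Bi j).card := by
    intro r hr j
    have h1 := hdeg (fun j => (r j : ℝ)) j
    have h2 : ∀ b ∈ Bi j, _ := fun b hb => fl_zero _ _ (hr b ((hBi j b).1 hb).1)
    constructor
    · have : (0 : ℝ) ≤ r (Fin.castAdd 12 j) := by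
        rw [h1]; exact Finset.sum_nonneg fun b hb => (h2 b hb).1
      exact_mod_cast this
    · obtain ⟨b, hb, hbq⟩ := hweak j
      have : (r (Fin.castAdd 12 j) : ℝ) < ∑ b ∈ Bi j, (1 : ℝ) := by
        rw [h1]
        exact Finset.sum_lt_sum (fun b hb => (h2 b hb).2.1) ⟨b, hb, (h2 b hb).2.2 hbq⟩
      simp only [Finset.sum_const, nsmul_eq_mul, mul_one] at this
      exact_mod_cast this
  let A : (Fin 16 → ℤ) → (Fin 4 → ℤ) → Finset (Fin n → ℕ) := fun r k =>
    if ∀ j, r (Fin.castAdd 12 j) ≤ k j then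
      (Fintype.piFinset fun j => Finset.piAntidiag (Bi j) (k j - r (Fin.castAdd 12 j)).toNat).image
        fun g b => g (typ b) b
    else ∅
  have hA : ∀ r k m, m ∈ A r k ↔ (∀ b ∉ B, m b = 0) ∧
      ∀ j, r (Fin.castAdd 12 j) + ∑ b ∈ Bi j, (m b : ℤ) = k j := by
    intro r k m
    simp only [A]
    split_ifs with h
    · rw [Finset.mem_image]
      constructor
      · rintro ⟨g, hg, rfl⟩
        rw [Fintype.mem_piFinset] at hg
        simp only [Finset.mem_piAntidiag] at hg
        constructor
        · intro b hb
          by_contra h0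
          exact hb ((hBi _ b).1 ((hg (typ b)).2 b h0)).1
        · intro j
          have e : ∑ b ∈ Bi j, ((g (typ b) b : ℕ) : ℤ) = ((∑ b ∈ Bi j, g j b : ℕ) : ℤ) := by
            push_cast
            exact Finset.sum_congr rfl fun b hb => by rw [← ((hBi j b).1 hb).2]
          rw [e, (hg j).1]
          have := h j
          omega
      · rintro ⟨h1, h2⟩
        refine ⟨fun j b => if j = typ b then m b else 0, ?_, ?_⟩
        · rw [Fintype.mem_piFinset]
          intro j
          rw [Finset.mem_piAntidiag]
          constructor
          · have e : ∑ b ∈ Bi j, (if j = typ b then m b else 0) = ∑ b ∈ Bi j, m b :=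
              Finset.sum_congr rfl fun b hb => by rw [if_pos ((hBi j b).1 hb).2]
            rw [e]
            have := h2 j
            rw [← Nat.cast_sum] at this
            omega
          · intro b hb
            by_cases h3 : j = typ b
            · rw [if_pos h3] at hb
              refine (hBi j b).2 ⟨?_, h3⟩
              by_contra h4
              exact hb (h1 b h4)
            · rw [if_neg h3] at hb
              exact absurd rfl hb
        · funext b
          simp
    · simp only [Finset.notMem_empty, false_iff]
      rintro ⟨-, h2⟩
      apply h
      intro j
      have := h2 j
      rw [← Nat.cast_sum] at this
      omega
  have hAcard : ∀ r ∈ box, ∀ k : Fin 4 → ℤ, (∀ i, 0 ≤ k i) → (((A r k).card : ℕ) : ℚ) =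
      MvPolynomial.eval (fun i => (k i : ℚ)) (∏ j, cp j (Bi j).card (r (Fin.castAdd 12 j))) := by
    intro r hr k hk
    rw [MvPolynomial.eval_prod, Finset.prod_congr rfl fun j _ => cp_eval j (Bi j).card
      (r (Fin.castAdd 12 j)) (hboxdeg r hr j).1 (hboxdeg r hr j).2 k (hk j)]
    simp only [A]
    split_ifs with h
    · rw [Finset.card_image_of_injOn, Fintype.card_piFinset]
      · push_cast
        refine Finset.prod_congr rfl fun j _ => ?_
        rw [if_pos (h j), card_piAntidiag_nat]
      · intro g hg g' hg' he
        rw [Finset.mem_coe, Fintype.mem_piFinset] at hg hg'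
        funext j b
        by_cases hj : j = typ b
        · have := congrFun he b
          simp only [← hj] at this
          exact this
        · have z : ∀ g : Fin 4 → Fin n → ℕ, g j ∈ Finset.piAntidiag (Bi j)
              (k j - r (Fin.castAdd 12 j)).toNat → g j b = 0 := by
            intro g hg
            by_contra h0
            exact hj ((hBi j b).1 ((Finset.mem_piAntidiag.1 hg).2 b h0)).2
          rw [z g (hg j), z g' (hg' j)]
    · push Not at h
      obtain ⟨j, hj⟩ := h
      rw [Finset.card_empty, Nat.cast_zero]
      symm
      exact Finset.prod_eq_zero (Finset.mem_univ j) (if_neg (not_le.2 hj))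
  -- coordinates of sums
  let Φ : (Σ _ : Fin 16 → ℤ, Fin n → ℕ) → (Fin 16 → ℤ) := fun p j => p.1 j + ∑ b, (p.2 b : ℤ) * v b j
  have hΦ : ∀ (r : Fin 16 → ℤ) (m : Fin n → ℕ), (∀ b ∉ B, m b = 0) →
      ∀ b, c (fun j => ((Φ ⟨r, m⟩ j : ℤ) : ℝ)) b = c (fun j => (r j : ℝ)) b + m b := by
    intro r m hm b
    have e : (fun j => ((Φ ⟨r, m⟩ j : ℤ) : ℝ)) = (fun j => (r j : ℝ)) +
        ∑ b, (m b : ℝ) • (fun j => (v b j : ℝ) : Fin 16 → ℝ) := by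
      funext j
      simp [Φ, Finset.sum_apply]
    rw [e, map_add, hc.uniq (fun b => (m b : ℝ)) (fun b hb => by rw [hm b hb]; simp)]
    rfl
  have hΦdeg : ∀ (r : Fin 16 → ℤ) (m : Fin n → ℕ), (∀ b ∉ B, m b = 0) → ∀ j : Fin 4,
      Φ ⟨r, m⟩ (Fin.castAdd 12 j) = r (Fin.castAdd 12 j) + ∑ b ∈ Bi j, (m b : ℤ) := by
    intro r m hm j
    simp only [Φ, hv]
    congr 1
    rw [← Finset.sum_subset (Finset.subset_univ (Bi j))]
    · refine Finset.sum_congr rfl fun b hb => ?_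
      rw [if_pos ((hBi j b).1 hb).2]; simp
    · intro b _ hb
      by_cases hbB : b ∈ B
      · rw [if_neg fun h => hb ((hBi j b).2 ⟨hbB, h⟩)]; simp
      · rw [hm b hbB]; simp
  refine ⟨∑ r ∈ hboxfin.toFinset, ∏ j, cp j (Bi j).card (r (Fin.castAdd 12 j)), ?_, fun k hk => ?_⟩
  · refine MvPolynomial.totalDegree_finsetSum_le fun r _ => ?_
    refine (MvPolynomial.totalDegree_finsetProd _ _).trans ?_
    refine (Finset.sum_le_sum fun j _ => cp_deg j _ _).trans ?_
    have h0 := hm 0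
    have h1 := hm 1
    have h2 := hm 2
    have h3 := hm 3
    rw [Fin.sum_univ_four] at hcard4 ⊢
    omega
  · have hset : {x : Fin 16 → ℤ | (∀ j : Fin 4, x (Fin.castAdd 12 j) = k j) ∧
        ∀ b ∈ B, 0 < c (fun j => (x j : ℝ)) b ∨ (c (fun j => (x j : ℝ)) b = 0 ∧ 0 < c q b)} =
        ((hboxfin.toFinset.sigma fun r => A r k).image Φ : Finset (Fin 16 → ℤ)) := by
      ext x
      rw [Set.mem_ofPred_eq, Finset.mem_coe, Finset.mem_image]
      constructor
      · rintro ⟨hx, hx2⟩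
        let m : Fin n → ℕ := fun b => if b ∈ B then (fl (0 < c q b) (c (fun j => (x j : ℝ)) b)).toNat else 0
        have hm0 : ∀ b ∉ B, m b = 0 := fun b hb => if_neg hb
        have hm1 : ∀ b ∈ B, (m b : ℤ) = fl (0 < c q b) (c (fun j => (x j : ℝ)) b) := by
          intro b hb
          simp only [m, if_pos hb]
          exact Int.toNat_of_nonneg ((fl_nonneg _ _).2 (hx2 b hb))
        let r : Fin 16 → ℤ := fun j => x j - ∑ b, (m b : ℤ) * v b j
        have hrx : Φ ⟨r, m⟩ = x := by
          funext j
          simp [Φ, r]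
        have hr : r ∈ box := by
          rw [hbox]
          intro b hb
          have h1 := hΦ r m hm0 b
          rw [hrx] at h1
          have h2 := hm1 b hb
          have h3 := fl_add (0 < c q b) (c (fun j => (r j : ℝ)) b) (m b)
          push_cast at h3
          rw [← h1] at h3
          omega
        refine ⟨⟨r, m⟩, ?_, hrx⟩
        rw [Finset.mem_sigma]
        refine ⟨by simpa using hr, (hA r k m).2 ⟨hm0, fun j => ?_⟩⟩
        rw [← hΦdeg r m hm0 j, hrx, hx j]
      · rintro ⟨⟨r, m⟩, hrm, rfl⟩
        rw [Finset.mem_sigma] at hrm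
        obtain ⟨hr, hmA⟩ := hrm
        have hr : r ∈ box := by simpa using hr
        obtain ⟨hm0, hm1⟩ := (hA r k m).1 hmA
        refine ⟨fun j => by rw [hΦdeg r m hm0 j, hm1 j], fun b hb => ?_⟩
        rw [← fl_nonneg, hΦ r m hm0 b]
        have h3 := fl_add (0 < c q b) (c (fun j => (r j : ℝ)) b) (m b)
        push_cast at h3
        rw [h3, (hbox r).1 hr b hb]
        omega
    rw [hset]
    refine ⟨Finset.finite_toSet _, ?_⟩
    rw [Set.ncard_coe_finset, Finset.card_image_of_injOn, Finset.card_sigma, map_sum]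
    · push_cast
      refine Finset.sum_congr rfl fun r hr => hAcard r (by simpa using hr) k hk
    · rintro ⟨r, m⟩ h ⟨r', m'⟩ h' he
      rw [Finset.mem_coe, Finset.mem_sigma] at h h'
      have hr : r ∈ box := by simpa using h.1
      have hr' : r' ∈ box := by simpa using h'.1
      have hm0 := ((hA r k m).1 h.2).1
      have hm0' := ((hA r' k m').1 h'.2).1
      have hmm : m = m' := by
        funext b
        by_cases hb : b ∈ B
        · have e1 := hΦ r m hm0 b
          have e2 := hΦ r' m' hm0' b
          rw [he, e2] at e1
          have f1 := fl_add (0 < c q b) (c (fun j => (r j : ℝ)) b) (m b)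
          have f2 := fl_add (0 < c q b) (c (fun j => (r' j : ℝ)) b) (m' b)
          push_cast at f1 f2
          rw [e1, f1, (hbox r).1 hr b hb, (hbox r').1 hr' b hb] at f2
          omega
        · rw [hm0 b hb, hm0' b hb]
      subst hmm
      have : r = r' := by
        funext j
        have := congrFun he j
        simpa [Φ] using this
      rw [this]

end count


/-- integer dot product with accumulator -/
def dz : ℤ → List ℕ → List ℤ → ℤ
  | acc, a :: l, x :: m => dz (acc + a * x) l m
  | acc, _, _ => acc

theorem dz_eq (N : ℕ) : ∀ (acc : ℤ) (l : List ℕ) (m : List ℤ), m.length = N →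
    dz acc l m = acc + ∑ i ∈ Finset.range N, (l.getD i 0 : ℤ) * m.getD i 0 := by
  induction N with
  | zero =>
    intro acc l m hm
    rw [List.length_eq_zero_iff.mp hm]
    cases l <;> simp [dz]
  | succ N ih =>
    intro acc l m hm
    cases m with
    | nil => simp at hm
    | cons y ys =>
      cases l with
      | nil => simp [dz]
      | cons x xs =>
        rw [dz, Finset.sum_range_succ', ih _ xs ys (by simpa using hm)]
        simp only [List.getD_cons_succ, List.getD_cons_zero]
        ring

def kp (k : Fin 4 → ℤ) (p : Fin 12 → ℤ) : List ℤ :=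
  [k 0, k 1, k 2, k 3, p 0, p 1, p 2, p 3, p 4, p 5, p 6, p 7, p 8, p 9, p 10, p 11]

theorem kp_getD (k : Fin 4 → ℤ) (p : Fin 12 → ℤ) (j : Fin 16) :
    (kp k p).getD j 0 = Fin.append k p j := by
  fin_cases j <;> rfl

theorem lin_kp (a : List ℕ × List ℕ) (k : Fin 4 → ℤ) (p : Fin 12 → ℤ) :
    0 ≤ lin a (fun j => ((Fin.append k p j : ℤ) : ℝ)) ↔ dz 0 a.2 (kp k p) ≤ dz 0 a.1 (kp k p) := by
  rw [dz_eq 16 0 a.1 (kp k p) rfl, dz_eq 16 0 a.2 (kp k p) rfl, lin_apply,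
    ← Fin.sum_univ_eq_sum_range (fun i => (a.1.getD i 0 : ℤ) * (kp k p).getD i 0),
    ← Fin.sum_univ_eq_sum_range (fun i => (a.2.getD i 0 : ℤ) * (kp k p).getD i 0)]
  simp only [kp_getD, zero_add, sub_mul, Finset.sum_sub_distrib, sub_nonneg]
  exact_mod_cast Iff.rfl

set_option maxRecDepth 10000 in
set_option maxHeartbeats 4000000 in
theorem ineqs_iff (k : Fin 4 → ℤ) (p : Fin 12 → ℤ) :
    SatisfiesIneqs k p ↔ ∀ a ∈ consL, dz 0 a.2 (kp k p) ≤ dz 0 a.1 (kp k p) := by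
  unfold consL
  simp only [List.forall_mem_cons, kp, dz, Nat.cast_zero, Nat.cast_one, Nat.cast_ofNat, zero_mul,
    one_mul, zero_add, add_zero, List.not_mem_nil, false_imp_iff, implies_true, and_true]
  unfold SatisfiesIneqs
  constructor
  · intro h
    casesm* _ ∧ _
    and_intros <;> assumption
  · intro h
    casesm* _ ∧ _
    and_intros <;> assumption

theorem sigma_iff (k : Fin 4 → ℤ) (p : Fin 12 → ℤ) (hk : ∀ i, 0 ≤ k i) :
    p ∈ SigmaSet k ↔ (∀ j, 0 ≤ ((Fin.append k p j : ℤ) : ℝ)) ∧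
      ∀ a ∈ consL, 0 ≤ lin a (fun j => ((Fin.append k p j : ℤ) : ℝ)) := by
  simp only [lin_kp]
  rw [← ineqs_iff]
  show (_ ∧ _) ↔ _
  refine and_congr_left fun _ => ⟨fun h j => ?_, fun h j => ?_⟩
  · refine Fin.addCases (fun i => ?_) (fun i => ?_) j
    · rw [Fin.append_left]; exact_mod_cast hk i
    · rw [Fin.append_right]; exact_mod_cast h i
  · have := h (Fin.natAdd 4 j)
    rw [Fin.append_right] at this
    exact_mod_cast this

def uL : List ℕ := [4, 4, 4, 4, 0, 0, 0, 0, 0, 0, 0, 0, 0, 0, 0, 0]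

theorem uL_ok : ∀ a ∈ consL, dot a.2 uL ≤ dot a.1 uL ∧
    ∀ j : Fin 16, dot a.2 (comb 1 1 uL (unitL j)) ≤ dot a.1 (comb 1 1 uL (unitL j)) := by
  decide +kernel

theorem vec_mem (l : List ℕ) (hl : l.length = 16) (h : ∀ a ∈ consL, dot a.2 l ≤ dot a.1 l) :
    (∀ j, 0 ≤ vec l j) ∧ ∀ a ∈ consL, 0 ≤ lin a (vec l) := by
  refine ⟨fun j => by simp [vec], fun a ha => ?_⟩
  rw [lin_vec a l hl, sub_nonneg]
  exact_mod_cast h a ha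

theorem CMem.mem_span {ι E : Type} [Fintype ι] [AddCommGroup E] [Module ℝ E] {v : ι → E} {x : E}
    (h : CMem v x) : x ∈ Submodule.span ℝ (Set.range v) := by
  obtain ⟨c, -, rfl⟩ := h
  exact Submodule.sum_mem _ fun i _ => Submodule.smul_mem _ _ (Submodule.subset_span ⟨i, rfl⟩)

theorem sigmaSet_card_polynomial :
    ∃ f : MvPolynomial (Fin 4) ℚ, f.totalDegree ≤ 12 ∧
      ∀ k : Fin 4 → ℤ, (∀ i, 0 ≤ k i) →
        (SigmaSet k).Finite ∧
          ((SigmaSet k).ncard : ℚ) = MvPolynomial.eval (fun i => (k i : ℚ)) f := by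
  classical
  obtain ⟨n, v, typ, hv, hcone⟩ := cone_desc
  let V : Fin n → Fin 16 → ℝ := fun i j => (v i j : ℝ)
  have hu : CMem V (vec uL) := (hcone _).1 (vec_mem _ rfl fun a ha => (uL_ok a ha).1)
  have huj : ∀ j : Fin 16, CMem V (vec uL + Pi.single j 1) := by
    intro j
    have hlen : uL.length = (unitL j).length := by simp [unitL, uL]
    have := (hcone _).1 (vec_mem (comb 1 1 uL (unitL j)) (by rw [comb_length _ _ _ _ hlen]; rfl)
      fun a ha => (uL_ok a ha).2 j)
    rw [vec_comb _ _ _ _ hlen, vec_unitL] at this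
    simpa using this
  have hspan : Submodule.span ℝ (Set.range V) = ⊤ := by
    rw [eq_top_iff]
    intro x _
    have : x = ∑ i : Fin 16, x i • (Pi.single i 1 : Fin 16 → ℝ) := by
      funext j
      simp [Finset.sum_apply, Pi.single_apply]
    rw [this]
    refine Submodule.sum_mem _ fun j _ => Submodule.smul_mem _ _ ?_
    have := Submodule.sub_mem _ (huj j).mem_span hu.mem_span
    simpa using this
  have hdeg : ∀ i, (∑ j : Fin 4, LinearMap.proj (Fin.castAdd 12 j) : (Fin 16 → ℝ) →ₗ[ℝ] ℝ) (V i) = 1 := by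
    intro i
    simp [V, hv]
  obtain ⟨w, G, hw, hGB, -, hiff, huniq⟩ := tri V hspan
    (∑ j : Fin 4, LinearMap.proj (Fin.castAdd 12 j)) (fun i => by rw [hdeg]; norm_num)
  have hq : ∀ j : Fin 4, 0 < (∑ i, w i • V i) (Fin.castAdd 12 j) := by
    intro j
    have hex : ∃ i, j = typ i := by
      by_contra hcon
      push Not at hcon
      obtain ⟨c, -, hc⟩ := hu
      have h1 := congrFun hc (Fin.castAdd 12 j)
      rw [Finset.sum_apply, Finset.sum_eq_zero] at h1
      · have : vec uL (Fin.castAdd 12 j) = 4 := by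
          fin_cases j <;> simp [vec, uL]
        rw [this] at h1
        norm_num at h1
      · intro i _
        simp [V, hv, hcon i]
    obtain ⟨i, hi⟩ := hex
    rw [Finset.sum_apply]
    refine Finset.sum_pos' (fun i _ => ?_) ⟨i, Finset.mem_univ i, ?_⟩
    · simp only [Pi.smul_apply, smul_eq_mul, V, hv]
      have := hw i
      split_ifs <;> simp [this.le]
    · simp only [Pi.smul_apply, smul_eq_mul, V, hv]
      rw [if_pos hi]
      simpa using hw i
  generalize (∑ i, w i • V i) = q at hiff huniq hq
  have hcount := fun B (hB : B ∈ G) => count_basis v typ hv B (crd V B) (hGB B hB) q hq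
  choose! f hf1 hf2 using hcount
  refine ⟨∑ B ∈ G, f B, MvPolynomial.totalDegree_finsetSum_le hf1, fun k hk => ?_⟩
  let S : Finset (Fin n) → Set (Fin 16 → ℤ) := fun B =>
    {x : Fin 16 → ℤ | (∀ j : Fin 4, x (Fin.castAdd 12 j) = k j) ∧ HH V q B (fun j => (x j : ℝ))}
  have hS : ∀ B x, x ∈ S B ↔ (∀ j : Fin 4, x (Fin.castAdd 12 j) = k j) ∧
    HH V q B (fun j => (x j : ℝ)) := fun B x => Iff.rfl
  have hSf : ∀ B ∈ G, (S B).Finite ∧ ((S B).ncard : ℚ) = MvPolynomial.eval (fun i => (k i : ℚ)) (f B) :=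
    fun B hB => hf2 B hB k hk
  have himg : Fin.append k '' SigmaSet k = ⋃ B ∈ G, S B := by
    ext x
    simp only [Set.mem_iUnion]
    constructor
    · rintro ⟨p, hp, rfl⟩
      rw [sigma_iff k p hk, hcone, hiff] at hp
      obtain ⟨B, hB, h⟩ := hp
      exact ⟨B, hB, (hS B _).2 ⟨fun j => Fin.append_left _ _ _, h⟩⟩
    · rintro ⟨B, hB, h⟩
      obtain ⟨h1, h2⟩ := (hS B x).1 h
      have hx : Fin.append k (fun j => x (Fin.natAdd 4 j)) = x := by
        funext j
        refine Fin.addCases (fun i => ?_) (fun i => ?_) j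
        · rw [Fin.append_left, h1]
        · rw [Fin.append_right]
      refine ⟨fun j => x (Fin.natAdd 4 j), ?_, hx⟩
      rw [sigma_iff k _ hk, hx, hcone, hiff]
      exact ⟨B, hB, h2⟩
  have hinj : Function.Injective (Fin.append k : (Fin 12 → ℤ) → (Fin 16 → ℤ)) := by
    intro p p' h
    funext j
    have := congrFun h (Fin.natAdd 4 j)
    rwa [Fin.append_right, Fin.append_right] at this
  have hfin : (⋃ B ∈ G, S B).Finite := Set.Finite.biUnion G.finite_toSet fun B hB => (hSf B hB).1
  refine ⟨?_, ?_⟩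
  · rw [← himg] at hfin
    exact hfin.of_finite_image hinj.injOn
  · rw [← Set.ncard_image_of_injective _ hinj, himg]
    let T : Finset (Fin n) → Finset (Fin 16 → ℤ) := fun B =>
      if h : (S B).Finite then h.toFinset else ∅
    have hT : ∀ B ∈ G, (T B : Set (Fin 16 → ℤ)) = S B := by
      intro B hB
      simp [T, (hSf B hB).1]
    have hU : (⋃ B ∈ G, S B) = (G.biUnion T : Finset (Fin 16 → ℤ)) := by
      rw [Finset.coe_biUnion]
      exact Set.iUnion₂_congr fun B hB => (hT B hB).symm
    rw [hU, Set.ncard_coe_finset, Finset.card_biUnion, map_sum]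
    · push_cast
      refine Finset.sum_congr rfl fun B hB => ?_
      rw [← (hSf B hB).2, ← hT B hB, Set.ncard_coe_finset]
    · intro B hB B' hB' hne
      rw [Function.onFun, Finset.disjoint_left]
      intro x hx hx'
      rw [← Finset.mem_coe, hT B hB] at hx
      rw [← Finset.mem_coe, hT B' hB'] at hx'
      exact hne (huniq _ B hB B' hB' ((hS B x).1 hx).2 ((hS B' x).1 hx').2)
end

section
/- Let k = (k1,k2,k3,k4) ∈ ℤ^4 with k1, k2, k3, k4 ≥ 1, and let p = (p1,…,p12) ∈ ℤ^12 have nonnegative entries with p_j = 0 for all j ∉ {1,3,8,11}, and suppose p11 ≤ k2, p8 ≤ k1+k2+k3, p3+p8 ≤ k1+k2+k3+k4, and p1+p3+p8+p11 ≤ k1+2k2+k3+k4. Then the pair (k,p) can be written as a sum, with nonnegative integer coefficients, of the 52 fundamental generators. (This is the terminal decomposition step in the case k1,k2,k3,k4 > 0 of the proof of Theorem 1 of the paper.) -/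
/-- The 52 fundamental generators in (ℤ^4) × (ℤ^12). -/
def gens : Fin 52 → (Fin 4 → ℤ) × (Fin 12 → ℤ) :=
  ![
    (Pi.single 0 1, 0),
    (Pi.single 0 1, Pi.single 11 1),
    (Pi.single 0 1, Pi.single 7 1),
    (Pi.single 0 1, Pi.single 6 1),
    (Pi.single 0 1, Pi.single 5 1),
    (Pi.single 0 1, Pi.single 2 1),
    (Pi.single 0 1, Pi.single 0 1),
    (Pi.single 0 1, Pi.single 0 1 + Pi.single 11 1),
    (Pi.single 1 1, 0),
    (Pi.single 1 1, Pi.single 10 1),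
    (Pi.single 1 1, Pi.single 9 1),
    (Pi.single 1 1, Pi.single 7 1),
    (Pi.single 1 1, Pi.single 6 1),
    (Pi.single 1 1, Pi.single 5 1),
    (Pi.single 1 1, Pi.single 4 1),
    (Pi.single 1 1, Pi.single 2 1),
    (Pi.single 1 1, Pi.single 1 1),
    (Pi.single 1 1, Pi.single 0 1),
    (Pi.single 1 1, Pi.single 7 1 + Pi.single 10 1),
    (Pi.single 1 1, Pi.single 5 1 + Pi.single 10 1),
    (Pi.single 1 1, Pi.single 2 1 + Pi.single 10 1),
    (Pi.single 1 1, Pi.single 1 1 + Pi.single 10 1),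
    (Pi.single 1 1, Pi.single 0 1 + Pi.single 10 1),
    (Pi.single 1 1, Pi.single 5 1 + Pi.single 9 1),
    (Pi.single 1 1, Pi.single 2 1 + Pi.single 9 1),
    (Pi.single 1 1, Pi.single 0 1 + Pi.single 9 1),
    (Pi.single 1 1, Pi.single 5 1 + Pi.single 7 1),
    (Pi.single 1 1, Pi.single 4 1 + Pi.single 7 1),
    (Pi.single 1 1, Pi.single 0 1 + Pi.single 7 1),
    (Pi.single 1 1, Pi.single 0 1 + Pi.single 6 1),
    (Pi.single 1 1, Pi.single 1 1 + Pi.single 5 1),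
    (Pi.single 1 1, Pi.single 0 1 + Pi.single 5 1),
    (Pi.single 1 1, Pi.single 0 1 + Pi.single 4 1),
    (Pi.single 1 1, Pi.single 0 1 + Pi.single 2 1),
    (Pi.single 1 1, Pi.single 0 1 + Pi.single 1 1),
    (Pi.single 1 1, Pi.single 0 2),
    (Pi.single 2 1, 0),
    (Pi.single 2 1, Pi.single 9 1),
    (Pi.single 2 1, Pi.single 8 1),
    (Pi.single 2 1, Pi.single 7 1),
    (Pi.single 2 1, Pi.single 2 1),
    (Pi.single 2 1, Pi.single 1 1),
    (Pi.single 2 1, Pi.single 0 1),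
    (Pi.single 2 1, Pi.single 2 1 + Pi.single 9 1),
    (Pi.single 3 1, 0),
    (Pi.single 3 1, Pi.single 5 1),
    (Pi.single 3 1, Pi.single 4 1),
    (Pi.single 3 1, Pi.single 3 1),
    (Pi.single 3 1, Pi.single 2 1),
    (Pi.single 3 1, Pi.single 1 1),
    (Pi.single 3 1, Pi.single 0 1),
    (Pi.single 3 1, Pi.single 1 1 + Pi.single 5 1)]

theorem split5 (r s1 s2 s3 s4 s5 : ℤ) (hr : 0 ≤ r) (h1 : 0 ≤ s1) (h2 : 0 ≤ s2) (h3 : 0 ≤ s3)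
    (h4 : 0 ≤ s4) (h5 : 0 ≤ s5) (h : r ≤ s1 + s2 + s3 + s4 + s5) :
    ∃ t1 t2 t3 t4 t5 : ℤ, (0 ≤ t1 ∧ t1 ≤ s1) ∧ (0 ≤ t2 ∧ t2 ≤ s2) ∧ (0 ≤ t3 ∧ t3 ≤ s3) ∧
      (0 ≤ t4 ∧ t4 ≤ s4) ∧ (0 ≤ t5 ∧ t5 ≤ s5) ∧ r = t1 + t2 + t3 + t4 + t5 := by
  obtain ⟨t1, e1⟩ : ∃ t, t = min r s1 := ⟨_, rfl⟩
  obtain ⟨t2, e2⟩ : ∃ t, t = min (r - t1) s2 := ⟨_, rfl⟩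
  obtain ⟨t3, e3⟩ : ∃ t, t = min (r - t1 - t2) s3 := ⟨_, rfl⟩
  obtain ⟨t4, e4⟩ : ∃ t, t = min (r - t1 - t2 - t3) s4 := ⟨_, rfl⟩
  refine ⟨t1, t2, t3, t4, r - t1 - t2 - t3 - t4, ?_⟩
  omega

/-- The terminal decomposition step in the case k1,k2,k3,k4 > 0 of the proof of Theorem 1:
if only p1, p3, p8, p11 can be nonzero and the four essential inequalities hold, then (k,p)
is a sum with nonnegative integer coefficients of the 52 fundamental generators. -/
theorem terminal_decomposition (k : Fin 4 → ℤ) (hk : ∀ i, 1 ≤ k i)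
    (p : Fin 12 → ℤ) (hp : ∀ j, 0 ≤ p j)
    (hzero : ∀ j : Fin 12, j ∉ ({0, 2, 7, 10} : Set (Fin 12)) → p j = 0)
    (h1 : p 10 ≤ k 1)
    (h2 : p 7 ≤ k 0 + k 1 + k 2)
    (h3 : p 2 + p 7 ≤ k 0 + k 1 + k 2 + k 3)
    (h4 : p 0 + p 2 + p 7 + p 10 ≤ k 0 + 2 * k 1 + k 2 + k 3) :
    ∃ c : Fin 52 → ℕ, (k, p) = ∑ t, (c t : ℤ) • gens t := by
  have k0 := hk 0
  have k1 := hk 1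
  have k2 := hk 2
  have k3 := hk 3
  have p0 := hp 0
  have p2 := hp 2
  have p7 := hp 7
  have p10 := hp 10
  have z1 : p 1 = 0 := hzero 1 (by simp)
  have z3 : p 3 = 0 := hzero 3 (by simp)
  have z4 : p 4 = 0 := hzero 4 (by simp)
  have z5 : p 5 = 0 := hzero 5 (by simp)
  have z6 : p 6 = 0 := hzero 6 (by simp)
  have z8 : p 8 = 0 := hzero 8 (by simp)
  have z9 : p 9 = 0 := hzero 9 (by simp)
  have z11 : p 11 = 0 := hzero 11 (by simp)
  obtain ⟨c0, cB, c2, c3, c4, C⟩ := split5 (p 7) (k 0) (k 1) (k 2) 0 0 (by omega) (by omega)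
    (by omega) (by omega) (by omega) (by omega) (by omega)
  obtain ⟨b0, bB, b2, b3, b4, B⟩ := split5 (p 2) (k 0 - c0) (k 1 - cB) (k 2 - c2) (k 3) 0
    (by omega) (by omega) (by omega) (by omega) (by omega) (by omega) (by omega)
  obtain ⟨a0, aB, a2, a3, aA, A⟩ := split5 (p 0) (k 0 - c0 - b0) (k 1 - cB - bB) (k 2 - c2 - b2)
    (k 3 - b3) (k 1 - p 10)
    (by omega) (by omega) (by omega) (by omega) (by omega) (by omega) (by omega)
  obtain ⟨x1, x2, x3, x4, x5, X⟩ := split5 (p 10) cB bB aB (k 1 - cB - bB - aB) 0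
    (by omega) (by omega) (by omega) (by omega) (by omega) (by omega) (by omega)
  obtain ⟨y1, y2, y3, y4, y5, Y⟩ := split5 aA (cB - x1) (bB - x2) (aB - x3)
    (k 1 - cB - bB - aB - x4) 0
    (by omega) (by omega) (by omega) (by omega) (by omega) (by omega) (by omega)
  obtain ⟨n0, e0⟩ := Int.eq_ofNat_of_zero_le (show 0 ≤ k 0 - c0 - b0 - a0 by omega)
  obtain ⟨n2, e2⟩ := Int.eq_ofNat_of_zero_le (show 0 ≤ c0 by omega)
  obtain ⟨n5, e5⟩ := Int.eq_ofNat_of_zero_le (show 0 ≤ b0 by omega)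
  obtain ⟨n6, e6⟩ := Int.eq_ofNat_of_zero_le (show 0 ≤ a0 by omega)
  obtain ⟨n8, e8⟩ := Int.eq_ofNat_of_zero_le (show 0 ≤ k 1 - cB - bB - aB - x4 - y4 by omega)
  obtain ⟨n9, e9⟩ := Int.eq_ofNat_of_zero_le (show 0 ≤ x4 by omega)
  obtain ⟨n11, e11⟩ := Int.eq_ofNat_of_zero_le (show 0 ≤ cB - x1 - y1 by omega)
  obtain ⟨n15, e15⟩ := Int.eq_ofNat_of_zero_le (show 0 ≤ bB - x2 - y2 by omega)
  obtain ⟨n17, e17⟩ := Int.eq_ofNat_of_zero_le (show 0 ≤ (aB - x3 - y3) + y4 by omega)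
  obtain ⟨n18, e18⟩ := Int.eq_ofNat_of_zero_le (show 0 ≤ x1 by omega)
  obtain ⟨n20, e20⟩ := Int.eq_ofNat_of_zero_le (show 0 ≤ x2 by omega)
  obtain ⟨n22, e22⟩ := Int.eq_ofNat_of_zero_le (show 0 ≤ x3 by omega)
  obtain ⟨n28, e28⟩ := Int.eq_ofNat_of_zero_le (show 0 ≤ y1 by omega)
  obtain ⟨n33, e33⟩ := Int.eq_ofNat_of_zero_le (show 0 ≤ y2 by omega)
  obtain ⟨n35, e35⟩ := Int.eq_ofNat_of_zero_le (show 0 ≤ y3 by omega)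
  obtain ⟨n36, e36⟩ := Int.eq_ofNat_of_zero_le (show 0 ≤ k 2 - c2 - b2 - a2 by omega)
  obtain ⟨n39, e39⟩ := Int.eq_ofNat_of_zero_le (show 0 ≤ c2 by omega)
  obtain ⟨n40, e40⟩ := Int.eq_ofNat_of_zero_le (show 0 ≤ b2 by omega)
  obtain ⟨n42, e42⟩ := Int.eq_ofNat_of_zero_le (show 0 ≤ a2 by omega)
  obtain ⟨n44, e44⟩ := Int.eq_ofNat_of_zero_le (show 0 ≤ k 3 - b3 - a3 by omega)
  obtain ⟨n48, e48⟩ := Int.eq_ofNat_of_zero_le (show 0 ≤ b3 by omega)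
  obtain ⟨n50, e50⟩ := Int.eq_ofNat_of_zero_le (show 0 ≤ a3 by omega)
  refine ⟨![n0, 0, n2, 0, 0, n5, n6, 0, n8, n9, 0, n11, 0, 0, 0, n15, 0, n17, n18, 0, n20, 0, n22, 0, 0, 0, 0, 0, n28, 0, 0, 0, 0, n33, 0, n35, n36, 0, 0, n39, n40, 0, n42, 0, n44, 0, 0, 0, n48, 0, n50, 0], ?_⟩
  refine Prod.ext (funext fun i => ?_) (funext fun i => ?_)
  · rw [Prod.fst_sum, Finset.sum_apply]
    fin_cases i <;> simp [Fin.sum_univ_succ, gens, Pi.single_apply] <;> omega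
  · rw [Prod.snd_sum, Finset.sum_apply]
    fin_cases i <;> simp [Fin.sum_univ_succ, gens, Pi.single_apply] <;> omega
end

section
/- Let V and W be finite-dimensional irreducible 𝔤-modules with highest weight vectors v ∈ V and w ∈ W. If p ∈ ℕ^N is essential for (V, v) and p' ∈ ℕ^N is essential for (W, w), then p + p' is essential for (V ⊗ W, v ⊗ w). (This is Proposition 1 of the paper: the essential signatures form a semigroup.) -/
open Pointwise TensorProduct

section Defs

variable {𝔤 : Type*} [LieRing 𝔤] [LieAlgebra ℂ 𝔤]

/-- The simultaneous eigenspace (root space) of a linear functional χ on a Cartan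
subalgebra H, as a subset of 𝔤. -/
def rootSet (H : LieSubalgebra ℂ 𝔤) (χ : Module.Dual ℂ H) : Set 𝔤 :=
  {x | ∀ h : H, ⁅(h : 𝔤), x⁆ = χ h • x}

/-- The set of roots: nonzero weights of the adjoint action of H on 𝔤. -/
def roots (H : LieSubalgebra ℂ 𝔤) : Set (Module.Dual ℂ H) :=
  {χ | χ ≠ 0 ∧ ∃ x ∈ rootSet H χ, x ≠ 0}

/-- m(p) = f₁^{p₁} ⋯ f_N^{p_N} · m (f_N acting first, f₁ last). -/
def sigVec {N : ℕ} (f : Fin N → 𝔤) {M : Type*} [AddCommGroup M] [LieRingModule 𝔤 M]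
    (p : Fin N → ℕ) (m : M) : M :=
  (List.finRange N).foldr (fun i acc => (fun y => ⁅f i, y⁆)^[p i] acc) m

/-- The partial sums q_i = p_1 + ⋯ + p_{N−i+1} (0-indexed version). -/
def qsum {N : ℕ} (p : Fin N → ℕ) (i : Fin N) : ℕ :=
  ∑ j : Fin N, if (j : ℕ) < N - (i : ℕ) then p j else 0

/-- The order on ℕ^N: p < p' iff (q_1, …, q_N) is lexicographically smaller than
(q_1', …, q_N'). -/
def sigLT {N : ℕ} (p p' : Fin N → ℕ) : Prop :=
  ∃ t : Fin N, (∀ s, s < t → qsum p s = qsum p' s) ∧ qsum p t < qsum p' t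

/-- p ∈ ℕ^N is essential for (M, m) if m(p) does not lie in the linear span of the
m(p') for p' < p. -/
def IsEssential {N : ℕ} (f : Fin N → 𝔤) {M : Type*} [AddCommGroup M] [Module ℂ M]
    [LieRingModule 𝔤 M] (p : Fin N → ℕ) (m : M) : Prop :=
  sigVec f p m ∉ Submodule.span ℂ {x | ∃ p', sigLT p' p ∧ x = sigVec f p' m}

/-- A highest weight vector: a nonzero simultaneous eigenvector for H annihilated by the
root space of every positive root. -/
def IsHighestWeightVector (H : LieSubalgebra ℂ 𝔤) (Φplus : Set (Module.Dual ℂ H))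
    {M : Type*} [AddCommGroup M] [Module ℂ M] [LieRingModule 𝔤 M] (m : M) : Prop :=
  m ≠ 0 ∧ (∀ h : H, ∃ c : ℂ, ⁅(h : 𝔤), m⁆ = c • m) ∧
    ∀ α ∈ Φplus, ∀ x ∈ rootSet H α, ⁅x, m⁆ = 0

end Defs

section Helpers

variable {𝔤 : Type*} [LieRing 𝔤] [LieAlgebra ℂ 𝔤]

lemma iter_eq {M : Type*} [AddCommGroup M] [Module ℂ M] [LieRingModule 𝔤 M] [LieModule ℂ 𝔤 M]
    (x : 𝔤) (n : ℕ) (m : M) : (fun y : M => ⁅x, y⁆)^[n] m = (LieModule.toEnd ℂ 𝔤 M x ^ n) m := by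
  rw [Module.End.pow_apply]
  rfl

lemma sigVec_succ {N : ℕ} (f : Fin (N + 1) → 𝔤) {M : Type*} [AddCommGroup M] [Module ℂ M]
    [LieRingModule 𝔤 M] [LieModule ℂ 𝔤 M] (p : Fin (N + 1) → ℕ) (m : M) :
    sigVec f p m = (LieModule.toEnd ℂ 𝔤 M (f 0) ^ p 0)
      (sigVec (fun i => f i.succ) (fun i => p i.succ) m) := by
  unfold sigVec
  rw [List.finRange_succ, List.foldr_cons, List.foldr_map, iter_eq]

variable {V W : Type*}
    [AddCommGroup V] [Module ℂ V] [LieRingModule 𝔤 V] [LieModule ℂ 𝔤 V]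
    [AddCommGroup W] [Module ℂ W] [LieRingModule 𝔤 W] [LieModule ℂ 𝔤 W]

lemma pow_tmul (x : 𝔤) (n : ℕ) (a : V) (b : W) :
    (LieModule.toEnd ℂ 𝔤 (V ⊗[ℂ] W) x ^ n) (a ⊗ₜ[ℂ] b) =
      ∑ k : Fin (n + 1), (n.choose k) •
        ((LieModule.toEnd ℂ 𝔤 V x ^ (k : ℕ)) a ⊗ₜ[ℂ] (LieModule.toEnd ℂ 𝔤 W x ^ (n - k)) b) := by
  have h1 : LieModule.toEnd ℂ 𝔤 (V ⊗[ℂ] W) x =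
      TensorProduct.map (LieModule.toEnd ℂ 𝔤 V x) LinearMap.id +
      TensorProduct.map LinearMap.id (LieModule.toEnd ℂ 𝔤 W x) := by
    ext a b
    simp [TensorProduct.LieModule.lie_tmul_right]
  have hc : Commute
      (TensorProduct.map (LieModule.toEnd ℂ 𝔤 V x) (LinearMap.id : W →ₗ[ℂ] W))
      (TensorProduct.map (LinearMap.id : V →ₗ[ℂ] V) (LieModule.toEnd ℂ 𝔤 W x)) := by
    ext a b
    simp
  have hA : ∀ k : ℕ, (TensorProduct.map (LieModule.toEnd ℂ 𝔤 V x) (LinearMap.id : W →ₗ[ℂ] W)) ^ k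
      = TensorProduct.map (LieModule.toEnd ℂ 𝔤 V x ^ k) (LinearMap.id : W →ₗ[ℂ] W) := by
    intro k
    rw [TensorProduct.map_pow]
    congr 1
    exact (one_pow k)
  have hB : ∀ k : ℕ, (TensorProduct.map (LinearMap.id : V →ₗ[ℂ] V) (LieModule.toEnd ℂ 𝔤 W x)) ^ k
      = TensorProduct.map (LinearMap.id : V →ₗ[ℂ] V) (LieModule.toEnd ℂ 𝔤 W x ^ k) := by
    intro k
    rw [TensorProduct.map_pow]
    congr 1
    exact (one_pow k)
  rw [h1, hc.add_pow, LinearMap.sum_apply, Finset.sum_range]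
  refine Finset.sum_congr rfl fun k _ => ?_
  rw [hA, hB, ← (Nat.cast_commute _ _).eq, ← nsmul_eq_mul]
  simp

lemma sigVec_tmul {N : ℕ} (f : Fin N → 𝔤) (p : Fin N → ℕ) (v : V) (w : W) :
    sigVec f p (v ⊗ₜ[ℂ] w) = ∑ k : (∀ i : Fin N, Fin (p i + 1)),
      (∏ i, (p i).choose (k i)) •
        (sigVec f (fun i => (k i : ℕ)) v ⊗ₜ[ℂ] sigVec f (fun i => p i - (k i : ℕ)) w) := by
  induction N with
  | zero => simp [sigVec]
  | succ N ih =>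
    rw [sigVec_succ, ih, map_sum]
    rw [← (Fin.consEquiv (fun i : Fin (N+1) => Fin (p i + 1))).sum_comp, Fintype.sum_prod_type_right]
    refine Finset.sum_congr rfl fun k _ => ?_
    rw [map_nsmul, pow_tmul, Finset.smul_sum]
    refine Finset.sum_congr rfl fun j _ => ?_
    rw [sigVec_succ f _ v, sigVec_succ f _ w, Fin.prod_univ_succ, smul_smul, mul_comm]
    simp [Fin.consEquiv]

lemma qsum_add {N : ℕ} (p p' : Fin N → ℕ) (i : Fin N) :
    qsum (p + p') i = qsum p i + qsum p' i := by
  unfold qsum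
  rw [← Finset.sum_add_distrib]
  refine Finset.sum_congr rfl fun j _ => ?_
  split_ifs <;> simp

lemma qsum_inj {N : ℕ} {p p' : Fin N → ℕ} (h : ∀ i, qsum p i = qsum p' i) : p = p' := by
  have key : ∀ n : ℕ, n ≤ N → (∑ j : Fin N, if (j : ℕ) < n then p j else 0) =
      ∑ j : Fin N, if (j : ℕ) < n then p' j else 0 := by
    intro n hn
    rcases Nat.eq_zero_or_pos n with rfl | hpos
    · simp
    · have := h ⟨N - n, by omega⟩
      simpa [qsum, Nat.sub_sub_self hn] using this
  have step : ∀ (r : Fin N → ℕ) (i : Fin N), (∑ j : Fin N, if (j : ℕ) < i + 1 then r j else 0) =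
      (∑ j : Fin N, if (j : ℕ) < i then r j else 0) + r i := by
    intro r i
    have : r i = ∑ j : Fin N, if j = i then r j else 0 := by simp
    rw [this, ← Finset.sum_add_distrib]
    refine Finset.sum_congr rfl fun j _ => ?_
    by_cases hj : j = i
    · subst hj; simp
    · have : (j : ℕ) ≠ i := fun h => hj (Fin.ext h)
      have e : ((j : ℕ) < i + 1) ↔ ((j : ℕ) < i) := by omega
      simp [hj, e]
  funext i
  have h1 := key (i + 1) (by omega)
  have h2 := key i (by omega)
  rw [step, step] at h1
  omega

lemma sigLT_tri {N : ℕ} (p p' : Fin N → ℕ) : sigLT p p' ∨ p = p' ∨ sigLT p' p := by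
  by_cases h : ∀ i, qsum p i = qsum p' i
  · exact Or.inr (Or.inl (qsum_inj h))
  · push Not at h
    have hne : (Finset.univ.filter fun i => qsum p i ≠ qsum p' i).Nonempty := by
      obtain ⟨i, hi⟩ := h
      exact ⟨i, by simpa using hi⟩
    obtain ⟨t, ht, hmin⟩ := Finset.exists_min_image _ id hne
    have hlt : ∀ s, s < t → qsum p s = qsum p' s := by
      intro s hs
      by_contra hc
      exact absurd (hmin s (by simpa using hc)) (not_le.mpr hs)
    have ht' : qsum p t ≠ qsum p' t := by simpa using ht
    rcases lt_or_gt_of_ne ht' with h | h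
    · exact Or.inl ⟨t, hlt, h⟩
    · exact Or.inr (Or.inr ⟨t, fun s hs => (hlt s hs).symm, h⟩)

lemma sigLT_irrefl {N : ℕ} (p : Fin N → ℕ) : ¬ sigLT p p := fun ⟨_, _, h⟩ => lt_irrefl _ h

lemma sigLT_trans {N : ℕ} {a b c : Fin N → ℕ} (h : sigLT a b) (h' : sigLT b c) : sigLT a c := by
  obtain ⟨t, h1, h2⟩ := h
  obtain ⟨s, h3, h4⟩ := h'
  rcases lt_trichotomy t s with hts | rfl | hts
  · exact ⟨t, fun r hr => (h1 r hr).trans (h3 r (hr.trans hts)), (h3 t hts) ▸ h2⟩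
  · exact ⟨t, fun r hr => (h1 r hr).trans (h3 r hr), h2.trans h4⟩
  · exact ⟨s, fun r hr => (h1 r (hr.trans hts)).trans (h3 r hr), (h1 s hts) ▸ h4⟩

lemma sigLT_add_right {N : ℕ} {a b : Fin N → ℕ} (c : Fin N → ℕ) (h : sigLT a b) :
    sigLT (a + c) (b + c) := by
  obtain ⟨t, h1, h2⟩ := h
  refine ⟨t, fun s hs => ?_, ?_⟩
  · simp [qsum_add, h1 s hs]
  · simpa [qsum_add] using h2

/-- If `a + b ≤ p + p'` then `a < p` or `b < p'` or both are equal. -/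
lemma sig_cases {N : ℕ} {a b p p' : Fin N → ℕ}
    (h : sigLT (a + b) (p + p') ∨ a + b = p + p') :
    sigLT a p ∨ sigLT b p' ∨ (a = p ∧ b = p') := by
  rcases sigLT_tri a p with h1 | rfl | h1
  · exact Or.inl h1
  · rcases sigLT_tri b p' with h2 | rfl | h2
    · exact Or.inr (Or.inl h2)
    · exact Or.inr (Or.inr ⟨rfl, rfl⟩)
    · have h3 : sigLT (a + p') (a + b) := by
        have := sigLT_add_right a h2
        rwa [add_comm, add_comm b] at this
      rcases h with h | h
      · exact absurd (sigLT_trans h h3) (sigLT_irrefl _)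
      · rw [h] at h3; exact absurd h3 (sigLT_irrefl _)
  · rcases sigLT_tri b p' with h2 | rfl | h2
    · exact Or.inr (Or.inl h2)
    · have h3 := sigLT_add_right b h1
      rcases h with h | h
      · exact absurd (sigLT_trans h h3) (sigLT_irrefl _)
      · rw [h] at h3; exact absurd h3 (sigLT_irrefl _)
    · have h3 : sigLT (a + p') (a + b) := by
        have := sigLT_add_right a h2
        rwa [add_comm, add_comm b] at this
      have h4 := sigLT_trans (sigLT_add_right p' h1) h3
      rcases h with h | h
      · exact absurd (sigLT_trans h h4) (sigLT_irrefl _)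
      · rw [h] at h4; exact absurd h4 (sigLT_irrefl _)

lemma exists_functional {N : ℕ} {f : Fin N → 𝔤} {p : Fin N → ℕ} {v : V}
    (hp : IsEssential f p v) : ∃ ξ : V →ₗ[ℂ] ℂ, ξ (sigVec f p v) ≠ 0 ∧
      ∀ a, sigLT a p → ξ (sigVec f a v) = 0 := by
  obtain ⟨ξ, h1, h2⟩ := Submodule.exists_le_ker_of_notMem hp
  exact ⟨ξ, h1, fun a ha => h2 (Submodule.subset_span ⟨a, ha, rfl⟩)⟩

lemma isEssential_add_aux {N : ℕ} {f : Fin N → 𝔤} {p p' : Fin N → ℕ} {v : V} {w : W}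
    (hp : IsEssential f p v) (hp' : IsEssential f p' w) :
    IsEssential f (p + p') (v ⊗ₜ[ℂ] w) := by
  obtain ⟨ξ, hξ, hξ0⟩ := exists_functional hp
  obtain ⟨η, hη, hη0⟩ := exists_functional hp'
  let F : V ⊗[ℂ] W →ₗ[ℂ] ℂ := LinearMap.mul' ℂ ℂ ∘ₗ TensorProduct.map ξ η
  have hF : ∀ a b, F (a ⊗ₜ[ℂ] b) = ξ a * η b := fun a b => by simp [F]
  have hadd : ∀ (q : Fin N → ℕ) (k : ∀ i : Fin N, Fin (q i + 1)),
      (fun i => (k i : ℕ)) + (fun i => q i - (k i : ℕ)) = q := by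
    intro q k
    funext i
    have := (k i).is_lt
    simp only [Pi.add_apply]
    omega
  intro hmem
  have hker : Submodule.span ℂ {x | ∃ q, sigLT q (p + p') ∧ x = sigVec f q (v ⊗ₜ[ℂ] w)} ≤
      LinearMap.ker F := by
    rw [Submodule.span_le]
    rintro _ ⟨q, hq, rfl⟩
    change F _ = 0
    rw [sigVec_tmul, map_sum]
    refine Finset.sum_eq_zero fun k _ => ?_
    rw [map_nsmul, hF]
    have hk := hadd q k
    rcases sig_cases (Or.inl (hk.symm ▸ hq)) with h | h | ⟨h, h'⟩
    · simp [hξ0 _ h]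
    · simp [hη0 _ h]
    · rw [h, h'] at hk
      rw [hk] at hq
      exact absurd hq (sigLT_irrefl _)
  have h0 : F (sigVec f (p + p') (v ⊗ₜ[ℂ] w)) = 0 := hker hmem
  let k0 : ∀ i : Fin N, Fin ((p + p') i + 1) := fun i => ⟨p i, by simp only [Pi.add_apply]; omega⟩
  rw [sigVec_tmul, map_sum, Finset.sum_eq_single k0] at h0
  · rw [map_nsmul, hF] at h0
    have e : (fun i => (p + p') i - (k0 i : ℕ)) = p' := by
      funext i; simp [k0]
    have e' : (fun i => (k0 i : ℕ)) = p := rfl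
    rw [e, e', nsmul_eq_mul] at h0
    refine mul_ne_zero ?_ (mul_ne_zero hξ hη) h0
    rw [Nat.cast_ne_zero, Finset.prod_ne_zero_iff]
    intro i _
    exact (Nat.choose_pos (Nat.lt_succ_iff.mp (k0 i).is_lt)).ne'
  · intro k _ hk0
    rw [map_nsmul, hF]
    rcases sig_cases (Or.inr (hadd _ k)) with h | h | ⟨h, h'⟩
    · rw [hξ0 _ h, zero_mul, smul_zero]
    · rw [hη0 _ h, mul_zero, smul_zero]
    · exact absurd (funext fun i => Fin.ext (congrFun h i)) hk0
  · intro h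
    exact absurd (Finset.mem_univ _) h

end Helpers

/-- Proposition 1 of the paper: the essential signatures form a semigroup. If p is essential
for (V, v) and p' is essential for (W, w), then p + p' is essential for (V ⊗ W, v ⊗ w). -/
theorem isEssential_add {𝔤 : Type*} [LieRing 𝔤] [LieAlgebra ℂ 𝔤]
    [FiniteDimensional ℂ 𝔤] [LieAlgebra.IsKilling ℂ 𝔤]
    (H : LieSubalgebra ℂ 𝔤) [H.IsCartanSubalgebra]
    (Φplus : Set (Module.Dual ℂ H))
    (hunion : roots H = Φplus ∪ -Φplus)
    (hdisj : Disjoint Φplus (-Φplus))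
    (hclosed : ∀ α ∈ Φplus, ∀ β ∈ Φplus, α + β ∈ roots H → α + β ∈ Φplus)
    {N : ℕ} (α : Fin N → Module.Dual ℂ H)
    (hinj : Function.Injective α) (hrange : Set.range α = Φplus)
    (f : Fin N → 𝔤) (hf0 : ∀ i, f i ≠ 0) (hf : ∀ i, f i ∈ rootSet H (-α i))
    (V W : Type*)
    [AddCommGroup V] [Module ℂ V] [LieRingModule 𝔤 V] [LieModule ℂ 𝔤 V]
    [FiniteDimensional ℂ V] [LieModule.IsIrreducible ℂ 𝔤 V]
    [AddCommGroup W] [Module ℂ W] [LieRingModule 𝔤 W] [LieModule ℂ 𝔤 W]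
    [FiniteDimensional ℂ W] [LieModule.IsIrreducible ℂ 𝔤 W]
    (v : V) (w : W)
    (hv : IsHighestWeightVector H Φplus v) (hw : IsHighestWeightVector H Φplus w)
    (p p' : Fin N → ℕ)
    (hp : IsEssential f p v) (hp' : IsEssential f p' w) :
    IsEssential f (p + p') (v ⊗ₜ[ℂ] w) := by
  exact isEssential_add_aux hp hp'
end
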